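/- arXiv:2402.05017 — 6 statements merged into one kernel-verified Lean document; each statement's English description precedes it below -/
import Mathlib

section
/- If a nonnegative sequence (a_k)_{k=0}^∞ is a TP_∞-preserver, then for every c > 0 with c ≠ 1, the sequence ( ((c^{k+1} − 1)/(c − 1)) · a_k )_{k=0}^∞ (the coefficient sequence of (A(z) − c·A(cz))/(1 − c), where A(z) = ∑ a_k z^k) is a totally positive sequence. -/
/-- A real sequence `(a_k)` is totally positive (TP_∞) if all finite minors of the
infinite Toeplitz matrix `(a_{j-i})` (with `a_k = 0` for `k < 0`) are nonnegative. -/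
def IsTotallyPositive (a : ℕ → ℝ) : Prop :=
  ∀ (n : ℕ) (i j : Fin n → ℕ), StrictMono i → StrictMono j →
    0 ≤ (Matrix.of fun p q : Fin n => if i p ≤ j q then a (j q - i p) else 0).det

/-- A real sequence is `m`-times positive (TP_m) if all such minors of order at most `m`
are nonnegative. -/
def IsMultiplyPositive (m : ℕ) (a : ℕ → ℝ) : Prop :=
  ∀ (n : ℕ), n ≤ m → ∀ (i j : Fin n → ℕ), StrictMono i → StrictMono j →
    0 ≤ (Matrix.of fun p q : Fin n => if i p ≤ j q then a (j q - i p) else 0).det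

/-- A nonnegative sequence `(a_k)` is a TP_∞-preserver if for every totally positive
sequence `(b_k)`, the sequence `(a_k b_k)` is totally positive. -/
def IsTPPreserver (a : ℕ → ℝ) : Prop :=
  ∀ b : ℕ → ℝ, IsTotallyPositive b → IsTotallyPositive (fun k => a k * b k)

/-!
If `X(z)` generates a totally positive sequence and `c ≥ 0`, then so does `X(z) / (1 - cz)`. Indeed,
in a minor of the new Toeplitz matrix, subtracting from each column a suitable multiple of the
preceding one leaves nonnegative combinations of old columns whose indices range over disjoint,
increasing intervals, so multilinearity writes the minor as a nonnegative combination of old minors.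
Starting from `1`, this shows that `1 / ((1 - z)(1 - cz))`, whose coefficients are
`1 + c + ⋯ + c ^ k = (c ^ (k + 1) - 1) / (c - 1)`, generates a totally positive sequence, to which
the preserver is then applied.
-/

open Finset

section TotallyNonnegativeMatrices

variable {ι κ R : Type*} [Preorder ι] [Preorder κ] [CommRing R] [PartialOrder R]

/-- A matrix with ordered index types is totally nonnegative if all its finite minors, with rows and
columns taken in increasing order, are nonnegative. -/
def IsTotallyNonneg (A : Matrix ι κ R) : Prop :=
  ∀ (n : ℕ) (i : Fin n → ι) (j : Fin n → κ), StrictMono i → StrictMono j →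
    0 ≤ (A.submatrix i j).det

theorem isTotallyNonneg_one [IsOrderedRing R] [DecidableEq ι] :
    IsTotallyNonneg (1 : Matrix ι ι R) := by
  intro n i j hi hj
  by_cases hdet : ((1 : Matrix ι ι R).submatrix i j).det = 0
  · exact hdet.ge
  rw [Matrix.det_apply] at hdet
  obtain ⟨σ, -, hσ⟩ := exists_ne_zero_of_sum_ne_zero hdet
  have hij_perm : i ∘ σ = j := by
    funext p
    by_contra hp
    have hentry : (1 : Matrix ι ι R).submatrix i j (σ p) p = 0 := Matrix.one_apply_ne hp
    exact hσ (smul_eq_zero_of_right _ (prod_eq_zero (mem_univ p) hentry))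
  have hij : i = j := by
    rw [← hi.range_inj hj, ← hij_perm, σ.surjective.range_comp]
  rw [← hij, Matrix.submatrix_one i hi.injective, Matrix.det_one]
  exact zero_le_one

end TotallyNonnegativeMatrices

theorem det_of_sum_mul {ι κ R : Type*} [Fintype ι] [DecidableEq ι] [CommRing R]
    (A : Matrix ι κ R) (S : ι → Finset κ) (w : ι → κ → R) :
    (Matrix.of fun p q => ∑ k ∈ S q, w q k * A p k).det =
      ∑ r ∈ Fintype.piFinset S, (∏ q, w q (r q)) * (A.submatrix id r).det := by
  have hcols : (Matrix.of fun p q => ∑ k ∈ S q, w q k * A p k).transpose =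
      fun q => ∑ k ∈ S q, w q k • A.transpose k := by
    ext q p
    simp [Matrix.transpose_apply]
  rw [← Matrix.det_transpose, hcols]
  refine (Matrix.detRowAlternating.toMultilinearMap.map_sum_finset _ _).trans
    (sum_congr rfl fun r _ => ?_)
  rw [MultilinearMap.map_smul_univ, smul_eq_mul, ← Matrix.det_transpose (A.submatrix id r)]
  rfl

section GeometricConvolution

variable {R : Type*}

/-- The convolution of a sequence with the geometric sequence `c ^ k`: if `X(z)` is the generating
function of `x`, that of `geomConv c x` is `X(z) / (1 - cz)`. -/
def geomConv [Semiring R] (c : R) (x : ℕ → R) (k : ℕ) : R :=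
  ∑ m ∈ range (k + 1), c ^ (k - m) * x m

theorem geomConv_eq_sum_Ico_add [Semiring R] (c : R) (x : ℕ → R) {a b : ℕ} (hab : a ≤ b) :
    geomConv c x b =
      ∑ m ∈ Ico (a + 1) (b + 1), c ^ (b - m) * x m + c ^ (b - a) * geomConv c x a := by
  have htail : c ^ (b - a) * geomConv c x a = ∑ m ∈ range (a + 1), c ^ (b - m) * x m := by
    rw [geomConv, mul_sum]
    refine sum_congr rfl fun m hm => ?_
    have hma : m ≤ a := mem_range_succ_iff.mp hm
    rw [← mul_assoc, ← pow_add, Nat.sub_add_sub_cancel hab hma]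
  rw [htail, add_comm, geomConv, sum_range_add_sum_Ico _ (Nat.succ_le_succ hab)]

theorem geomConv_one [Semiring R] (c : R) (k : ℕ) :
    geomConv c 1 k = ∑ m ∈ range (k + 1), c ^ m := by
  simpa [geomConv] using sum_range_reflect (fun m => c ^ m) (k + 1)

theorem geomConv_single_zero [Semiring R] (c : R) (k : ℕ) :
    geomConv c (Pi.single 0 1) k = c ^ k := by
  simp [geomConv, Pi.single_apply]

theorem IsTotallyNonneg.geomConv_rows {ι : Type*} [Preorder ι] [CommRing R] [PartialOrder R]
    [IsOrderedRing R] {A : Matrix ι ℕ R} (hA : IsTotallyNonneg A) {c : R} (hc : 0 ≤ c) :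
    IsTotallyNonneg (Matrix.of fun p => geomConv c (A p)) := by
  rintro (_ | n) i j hi hj
  · simp
  let lower : Fin (n + 1) → ℕ := Fin.cons 0 fun q => j q.castSucc + 1
  let block : Fin (n + 1) → Finset ℕ := fun q => Ico (lower q) (j q + 1)
  have hcolumn_ops : ((Matrix.of fun p => geomConv c (A p)).submatrix i j).det =
      (Matrix.of fun p q => ∑ k ∈ block q, c ^ (j q - k) * A.submatrix i id p k).det := by
    refine Matrix.det_eq_of_forall_col_eq_smul_add_pred
      (fun q => c ^ (j q.succ - j q.castSucc)) (fun p => ?_) fun p q => ?_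
    · simp [block, lower, geomConv]
    · exact geomConv_eq_sum_Ico_add c (A (i p)) (hj.monotone q.castSucc_le_succ)
  have hblock_strictMono : ∀ r ∈ Fintype.piFinset block, StrictMono r := by
    intro r hr
    have hmem : ∀ q, lower q ≤ r q ∧ r q < j q + 1 := fun q =>
      mem_Ico.mp (Fintype.mem_piFinset.mp hr q)
    refine Fin.strictMono_iff_lt_succ.mpr fun q => ?_
    exact (hmem q.castSucc).2.trans_le (hmem q.succ).1
  rw [hcolumn_ops, det_of_sum_mul]
  refine sum_nonneg fun r hr => mul_nonneg (prod_nonneg fun q _ => pow_nonneg hc _) ?_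
  exact hA (n + 1) i r hi (hblock_strictMono r hr)

end GeometricConvolution

section Toeplitz

/-- The infinite upper triangular Toeplitz matrix `(x_{j-i})`, where `x_k = 0` for `k < 0`. -/
def upperToeplitz {R : Type*} [Zero R] (x : ℕ → R) : Matrix ℕ ℕ R :=
  Matrix.of fun i j => if i ≤ j then x (j - i) else 0

theorem isTotallyPositive_iff_upperToeplitz {x : ℕ → ℝ} :
    IsTotallyPositive x ↔ IsTotallyNonneg (upperToeplitz x) :=
  Iff.rfl

theorem upperToeplitz_single_zero {R : Type*} [Zero R] [One R] :
    upperToeplitz (Pi.single 0 1 : ℕ → R) = 1 := by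
  ext i j
  simp only [upperToeplitz, Matrix.of_apply, Pi.single_apply, Matrix.one_apply]
  grind

theorem upperToeplitz_geomConv {R : Type*} [Semiring R] (c : R) (x : ℕ → R) :
    upperToeplitz (geomConv c x) = Matrix.of fun i => geomConv c (upperToeplitz x i) := by
  ext i j
  have hfilter : (range (j + 1)).filter (i ≤ ·) = Ico i (j + 1) := by
    grind
  simp only [upperToeplitz, geomConv, Matrix.of_apply, mul_ite, mul_zero, ← sum_filter, hfilter]
  split_ifs with hij
  · rw [sum_Ico_eq_sum_range, Nat.sub_add_comm hij]
    simp only [Nat.sub_sub, Nat.add_sub_cancel_left]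
  · rw [Ico_eq_empty_of_le (by omega), sum_empty]

end Toeplitz

theorem isTotallyPositive_single_zero : IsTotallyPositive (Pi.single 0 1) := by
  rw [isTotallyPositive_iff_upperToeplitz, upperToeplitz_single_zero]
  exact isTotallyNonneg_one

theorem IsTotallyPositive.geomConv {x : ℕ → ℝ} (hx : IsTotallyPositive x) {c : ℝ} (hc : 0 ≤ c) :
    IsTotallyPositive (geomConv c x) := by
  rw [isTotallyPositive_iff_upperToeplitz, upperToeplitz_geomConv]
  exact (isTotallyPositive_iff_upperToeplitz.mp hx).geomConv_rows hc

theorem isTotallyPositive_pow {c : ℝ} (hc : 0 ≤ c) : IsTotallyPositive fun k => c ^ k := by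
  simpa only [← geomConv_single_zero] using isTotallyPositive_single_zero.geomConv hc

theorem isTotallyPositive_one : IsTotallyPositive 1 := by
  simpa only [one_pow, ← Pi.one_def] using isTotallyPositive_pow zero_le_one

theorem isTotallyPositive_geom_sum {c : ℝ} (hc : 0 ≤ c) :
    IsTotallyPositive fun k => ∑ m ∈ range (k + 1), c ^ m := by
  simpa only [← geomConv_one] using isTotallyPositive_one.geomConv hc

/-- if `a` is a TP_∞-preserver then `((c^(k+1)-1)/(c-1) * a_k)` is
totally positive, for every `c > 0`, `c ≠ 1`. -/
theorem stmt_7 (a : ℕ → ℝ) (ha : ∀ k, 0 ≤ a k) (hpres : IsTPPreserver a) :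
    ∀ c : ℝ, 0 < c → c ≠ 1 →
      IsTotallyPositive (fun k => (c ^ (k + 1) - 1) / (c - 1) * a k) := by
  intro c hc hc_ne_one
  have hgeom : IsTotallyPositive fun k => (c ^ (k + 1) - 1) / (c - 1) := by
    simpa only [geom_sum_eq hc_ne_one] using isTotallyPositive_geom_sum hc.le
  simpa only [mul_comm] using hpres _ hgeom
end

section
/- If a nonnegative sequence (a_k)_{k=0}^∞ is a TP_∞-preserver, then for every d ≥ 0, the sequence (c_k)_{k=0}^∞ defined by c_0 = a_0/(d+1) and c_k = a_k for k ≥ 1 (the coefficient sequence of A(z) − (d/(d+1))·a_0, where A(z) = ∑ a_k z^k) is a totally positive sequence. -/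
/-!
The sequence `(s, t, t, t, …)` with `0 ≤ s ≤ t` has generating function
`(s + (t - s) z) / (1 - z)` and is totally positive. Multiplying by it with `s = 1 / (d + 1)` and
`t = 1` divides `a 0` by `d + 1` and keeps the other terms.

Total positivity of `(s, t, t, t, …)` is by induction on the order of a minor. If its first
column vanishes below the corner, expand along that column. Otherwise some later row agrees with the
first row off the first column; subtract it from the first row and expand along the result. Either
way a nonnegative factor times a smaller minor remains.
-/

section Determinant

variable {R : Type*} [CommRing R] {n : ℕ} {A : Matrix (Fin (n + 1)) (Fin (n + 1)) R}

theorem det_eq_mul_det_submatrix_succ_of_column_zero (h : ∀ p : Fin n, A p.succ 0 = 0) :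
    A.det = A 0 0 * (A.submatrix Fin.succ Fin.succ).det := by
  simp [Matrix.det_succ_column_zero, Fin.sum_univ_succ, h]

theorem det_eq_mul_det_submatrix_succ_of_row_zero (h : ∀ q : Fin n, A 0 q.succ = 0) :
    A.det = A 0 0 * (A.submatrix Fin.succ Fin.succ).det := by
  simp [Matrix.det_succ_row_zero, Fin.sum_univ_succ, h]

theorem det_eq_sub_mul_det_submatrix_succ_of_row_eq (r : Fin n)
    (h : ∀ q : Fin n, A 0 q.succ = A r.succ q.succ) :
    A.det = (A 0 0 - A r.succ 0) * (A.submatrix Fin.succ Fin.succ).det := by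
  let B := A.updateRow 0 (A 0 + (-1 : R) • A r.succ)
  have hrow : ∀ q : Fin n, B 0 q.succ = 0 := fun q => by simp [B, h]
  have hcorner : B 0 0 = A 0 0 - A r.succ 0 := by simp [B, sub_eq_add_neg]
  have hminor : B.submatrix Fin.succ Fin.succ = A.submatrix Fin.succ Fin.succ := by
    ext p q
    simp [B, Matrix.updateRow_apply]
  calc A.det = B.det := (Matrix.det_updateRow_add_smul_self A (Fin.succ_ne_zero r).symm (-1)).symm
    _ = B 0 0 * (B.submatrix Fin.succ Fin.succ).det :=
      det_eq_mul_det_submatrix_succ_of_row_zero hrow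
    _ = _ := by rw [hcorner, hminor]

end Determinant

/-- The submatrix of the infinite Toeplitz matrix `(a_{j-i})` (with `a_k = 0` for `k < 0`) on the
rows `i` and the columns `j`, whose determinant is a minor in the sense of `IsTotallyPositive`. -/
def toeplitzSubmatrix {R ι κ : Type*} [Zero R] (a : ℕ → R) (i : ι → ℕ) (j : κ → ℕ) :
    Matrix ι κ R :=
  Matrix.of fun p q => if i p ≤ j q then a (j q - i p) else 0

section ToeplitzSubmatrix

variable {ι κ : Type*} {i : ι → ℕ} {j : κ → ℕ} {p : ι} {q : κ}

theorem toeplitzSubmatrix_apply_of_lt {R : Type*} [Zero R] (a : ℕ → R) (h : j q < i p) :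
    toeplitzSubmatrix a i j p q = 0 := by
  simp [toeplitzSubmatrix, h]

/-- The sequence `(s, t, t, t, …)`, by which the terms of a sequence are multiplied to rescale the
initial one relative to the others. -/
def stepSequence {R : Type*} (s t : R) (k : ℕ) : R :=
  if k = 0 then s else t

theorem toeplitzSubmatrix_stepSequence_apply_of_lt {R : Type*} [Zero R] (s t : R) (h : i p < j q) :
    toeplitzSubmatrix (stepSequence s t) i j p q = t := by
  simp [toeplitzSubmatrix, stepSequence, h.le, Nat.sub_eq_zero_iff_le, h]

section Order

variable {R : Type*} [Zero R] [Preorder R] {s t : R}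

theorem toeplitzSubmatrix_stepSequence_nonneg (hs : 0 ≤ s) (hst : s ≤ t) (p : ι) (q : κ) :
    0 ≤ toeplitzSubmatrix (stepSequence s t) i j p q := by
  simp only [toeplitzSubmatrix, stepSequence, Matrix.of_apply]
  split_ifs
  exacts [hs, hs.trans hst, le_rfl]

theorem toeplitzSubmatrix_stepSequence_le (hs : 0 ≤ s) (hst : s ≤ t) (p : ι) (q : κ) :
    toeplitzSubmatrix (stepSequence s t) i j p q ≤ t := by
  simp only [toeplitzSubmatrix, stepSequence, Matrix.of_apply]
  split_ifs
  exacts [hst, le_rfl, hs.trans hst]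

end Order

end ToeplitzSubmatrix

theorem isTotallyPositive_stepSequence {s t : ℝ} (hs : 0 ≤ s) (hst : s ≤ t) :
    IsTotallyPositive (stepSequence s t) := by
  intro n
  induction n with
  | zero => simp
  | succ n ih =>
    intro i j hi hj
    let A := toeplitzSubmatrix (stepSequence s t) i j
    change 0 ≤ A.det
    have hminor : 0 ≤ (A.submatrix Fin.succ Fin.succ).det :=
      ih (i ∘ Fin.succ) (j ∘ Fin.succ) (hi.comp Fin.strictMono_succ) (hj.comp Fin.strictMono_succ)
    by_cases hcol : ∀ p : Fin n, j 0 < i p.succ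
    · rw [det_eq_mul_det_submatrix_succ_of_column_zero
        fun p => toeplitzSubmatrix_apply_of_lt _ (hcol p)]
      exact mul_nonneg (toeplitzSubmatrix_stepSequence_nonneg hs hst 0 0) hminor
    · push Not at hcol
      obtain ⟨r, hr⟩ := hcol
      have hi0 : i 0 < j 0 := (hi r.succ_pos).trans_le hr
      have hA0 : ∀ q, A 0 q = t := fun q =>
        toeplitzSubmatrix_stepSequence_apply_of_lt s t (hi0.trans_le (hj.monotone q.zero_le))
      have hAr : ∀ q : Fin n, A r.succ q.succ = t := fun q =>
        toeplitzSubmatrix_stepSequence_apply_of_lt s t (hr.trans_lt (hj q.succ_pos))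
      have hfactor : 0 ≤ A 0 0 - A r.succ 0 := by
        rw [hA0]
        exact sub_nonneg.2 (toeplitzSubmatrix_stepSequence_le hs hst r.succ 0)
      rw [det_eq_sub_mul_det_submatrix_succ_of_row_eq r fun q => (hA0 _).trans (hAr q).symm]
      exact mul_nonneg hfactor hminor

/-- if `a` is a TP_∞-preserver then the sequence obtained by replacing
`a_0` by `a_0/(d+1)` is totally positive, for every `d ≥ 0`. -/
theorem stmt_9 (a : ℕ → ℝ) (ha : ∀ k, 0 ≤ a k) (hpres : IsTPPreserver a) :
    ∀ d : ℝ, 0 ≤ d →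
      IsTotallyPositive (fun k => if k = 0 then a 0 / (d + 1) else a k) := by
  intro d hd
  have hstep : IsTotallyPositive (stepSequence (1 / (d + 1)) 1) :=
    isTotallyPositive_stepSequence (by positivity) (div_le_one_of_le₀ (by linarith) (by positivity))
  convert hpres _ hstep using 2 with k
  rcases eq_or_ne k 0 with rfl | hk
  · simp [stepSequence, div_eq_mul_inv]
  · simp [stepSequence, hk]
end

section
/- Let k ∈ ℕ, k ≥ 2, and β > 0, γ > 0, δ > 0. The Taylor coefficients of A_{k,β}(z) = (1 − βz)^{−k} are binom(s+k−1, k−1)·β^s, and the Taylor coefficients of F_{γ,δ}(z) = e^{γz}/(1 − δz) are c_s = ∑_{j=0}^s (γ^j/j!)·δ^{s−j}. Then for all complex z with |z| < 1/(δβ), the Hadamard product satisfies ∑_{s=0}^∞ binom(s+k−1, k−1) β^s c_s z^s = (k−1)!·e^{γβz}/(1 − δβz)^k · Q_{2k−2}(z), where Q_{2k−2}(z) = ∑_{s=0}^{k−1} ∑_{t=k−s−1}^{k−1} [ (γβ)^{k−1−s} (δβ)^{t−k+s+1} / ((k−1−s)!·(k−1−t)!·t!) ] · z^t (1 − δβz)^{2k−t−s−2},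 a polynomial of degree at most 2k−2. -/
/-!
Substituting `x = γβz`, `y = δβz` turns the series into `∑ C(s+m, m) ∑ᵢ xⁱ/i! · y^(s-i)` with
`m = k - 1`. Vandermonde's identity for `s + m = i + (s - i) + m` splits `C(s+m, m)` into terms
`C(i, j) C(s-i, l) C(m, j+l)`, each of which turns the Cauchy product of `xⁱ/i!` and `yⁿ` into the
Cauchy product of `C(i, j) xⁱ/i!` and `C(n, l) yⁿ`, whose sums are `xʲ/j! · eˣ` and
`yˡ/(1-y)^(l+1)`.
-/

open Finset
open scoped Nat

theorem choose_add_add_eq_sum (p n q m : ℕ) :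
    (p + n + q).choose m =
      ∑ j ∈ range (m + 1), ∑ t ∈ Icc j m, q.choose (m - t) * (p.choose j * n.choose (t - j)) := by
  calc (p + n + q).choose m
      = ∑ t ∈ range (m + 1),
          q.choose (m - t) * ∑ j ∈ range (t + 1), p.choose j * n.choose (t - j) := by
        simp only [Nat.add_choose_eq, Nat.sum_antidiagonal_eq_sum_range_succ_mk, mul_comm]
    _ = _ := by
        simp only [mul_sum]
        refine sum_comm' fun t j => ?_
        simp only [mem_range, mem_Icc]
        omega

theorem hasSum_choose_mul_of_hasSum_add {R : Type*} [Ring R] [TopologicalSpace R]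
    [IsTopologicalAddGroup R] {f : ℕ → R} {l : ℕ} {a : R}
    (h : HasSum (fun n => ((n + l).choose l : R) * f (n + l)) a) :
    HasSum (fun n => (n.choose l : R) * f n) a := by
  have initial_sum : ∑ n ∈ range l, (n.choose l : R) * f n = 0 :=
    sum_eq_zero fun n hn => by simp [Nat.choose_eq_zero_of_lt (mem_range.mp hn)]
  rwa [← hasSum_nat_add_iff' l, initial_sum, sub_zero]

theorem choose_mul_sum_range_mul_eq_sum {R : Type*} [Semiring R] (f g : ℕ → R) (q m s : ℕ) :
    ((s + q).choose m : R) * ∑ i ∈ range (s + 1), f i * g (s - i) =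
      ∑ j ∈ range (m + 1), ∑ t ∈ Icc j m, (q.choose (m - t) : R) *
        ∑ i ∈ range (s + 1),
          ((i.choose j : R) * f i) * (((s - i).choose (t - j) : R) * g (s - i)) := by
  simp only [mul_sum]
  rw [sum_congr rfl fun j _ => sum_comm, sum_comm]
  refine sum_congr rfl fun i hi => ?_
  have vandermonde := choose_add_add_eq_sum i (s - i) q m
  rw [Nat.add_sub_cancel' (Nat.lt_succ_iff.mp (mem_range.mp hi))] at vandermonde
  simp only [vandermonde, ← nsmul_eq_mul, sum_smul, mul_smul, smul_mul_smul_comm]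

theorem hasSum_choose_mul_sum_range_mul {R : Type*} [NormedRing R] [CompleteSpace R] {f g : ℕ → R}
    (hf : ∀ j, Summable fun n => ‖(n.choose j : R) * f n‖)
    (hg : ∀ l, Summable fun n => ‖(n.choose l : R) * g n‖) (q m : ℕ) :
    HasSum (fun s => ((s + q).choose m : R) * ∑ i ∈ range (s + 1), f i * g (s - i))
      (∑ j ∈ range (m + 1), ∑ t ∈ Icc j m, (q.choose (m - t) : R) *
        ((∑' n, (n.choose j : R) * f n) * ∑' n, (n.choose (t - j) : R) * g n)) := by
  simp only [choose_mul_sum_range_mul_eq_sum]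
  exact hasSum_sum fun j _ => hasSum_sum fun t _ =>
    (hasSum_sum_range_mul_of_summable_norm (hf j) (hg (t - j))).mul_left _

section Geometric

variable {𝕜 : Type*} [NormedDivisionRing 𝕜] {y : 𝕜}

theorem summable_norm_choose_mul_pow (l : ℕ) (hy : ‖y‖ < 1) :
    Summable fun n : ℕ => ‖(n.choose l : 𝕜) * y ^ n‖ := by
  have real_summable : Summable fun n : ℕ => ((n + l).choose l : ℝ) * ‖y‖ ^ n :=
    summable_choose_mul_geometric_of_norm_lt_one l (by rwa [norm_norm])
  rw [← summable_nat_add_iff l]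
  refine (real_summable.mul_right (‖y‖ ^ l)).of_nonneg_of_le (fun _ => norm_nonneg _) fun n => ?_
  rw [norm_mul, norm_pow, pow_add, ← mul_assoc]
  gcongr
  simpa using Nat.norm_cast_le (α := 𝕜) ((n + l).choose l)

theorem hasSum_choose_mul_pow [HasSummableGeomSeries 𝕜] (l : ℕ) (hy : ‖y‖ < 1) :
    HasSum (fun n : ℕ => (n.choose l : 𝕜) * y ^ n) (y ^ l / (1 - y) ^ (l + 1)) := by
  apply hasSum_choose_mul_of_hasSum_add
  convert! (hasSum_choose_mul_geometric_of_norm_lt_one l hy).mul_right (y ^ l) using 1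
  · simp only [pow_add, mul_assoc]
  · have commute_pow : Commute (y ^ l) ((1 - y) ^ (l + 1)) :=
      ((Commute.one_right y).sub_right (Commute.refl y)).pow_pow l (l + 1)
    rw [one_div, div_eq_mul_inv, commute_pow.inv_right₀.eq]

end Geometric

theorem add_choose_mul_pow_div_factorial {K : Type*} [Field K] [CharZero K] (n j : ℕ) (x : K) :
    ((n + j).choose j : K) * (x ^ (n + j) / (n + j)!) = x ^ j / j ! * (x ^ n / n !) := by
  have factorial_ne_zero : ((n + j)! : K) ≠ 0 := Nat.cast_ne_zero.mpr (n + j).factorial_ne_zero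
  rw [← Nat.choose_symm_add, Nat.cast_add_choose]
  field_simp
  ring

section Exponential

variable {𝕜 : Type*} [NormedField 𝕜] [NormedAlgebra ℚ 𝕜]

theorem summable_norm_choose_mul_pow_div_factorial (j : ℕ) (x : 𝕜) :
    Summable fun n : ℕ => ‖(n.choose j : 𝕜) * (x ^ n / n !)‖ := by
  have := algebraRat.charZero 𝕜
  rw [← summable_nat_add_iff j]
  simp only [add_choose_mul_pow_div_factorial, norm_mul]
  exact (NormedSpace.norm_expSeries_div_summable x).mul_left _

variable [CompleteSpace 𝕜]

theorem hasSum_choose_mul_pow_div_factorial (j : ℕ) (x : 𝕜) :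
    HasSum (fun n : ℕ => (n.choose j : 𝕜) * (x ^ n / n !)) (x ^ j / j ! * NormedSpace.exp x) := by
  have := algebraRat.charZero 𝕜
  apply hasSum_choose_mul_of_hasSum_add
  simp only [add_choose_mul_pow_div_factorial]
  exact (NormedSpace.expSeries_div_hasSum_exp x).mul_left _

end Exponential

section Numerator

variable {K : Type*} [Field K]

/-- The polynomial `Q_{2k-2}(z)` of the closed form, with `m = k - 1`, in the variables `x = γβz`
and `y = δβz`; the index `j` is `k - 1 - s` in the paper's double sum. -/
def hadamardNumerator (m : ℕ) (x y : K) : K :=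
  ∑ j ∈ range (m + 1), ∑ t ∈ Icc j m,
    x ^ j * y ^ (t - j) / (j ! * (m - t)! * t !) * (1 - y) ^ (m + j - t)

theorem hadamardNumerator_mul_mul {k : ℕ} (hk : 1 ≤ k) (a b z : K) :
    hadamardNumerator (k - 1) (a * z) (b * z) =
      ∑ s ∈ range k, ∑ t ∈ Icc (k - s - 1) (k - 1),
        a ^ (k - 1 - s) * b ^ (t + s + 1 - k) / ((k - 1 - s)! * (k - 1 - t)! * t !) *
          z ^ t * (1 - b * z) ^ (2 * k - t - s - 2) := by
  rw [hadamardNumerator, ← sum_range_reflect, Nat.sub_add_cancel hk]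
  refine sum_congr rfl fun s hs => ?_
  rw [Nat.sub_right_comm k s 1]
  refine sum_congr rfl fun t ht => ?_
  obtain ⟨hst, htk⟩ := mem_Icc.mp ht
  have hsk := mem_range.mp hs
  have exponent_b : t - (k - 1 - s) = t + s + 1 - k := by omega
  have exponent_one_sub : k - 1 + (k - 1 - s) - t = 2 * k - t - s - 2 := by omega
  have exponent_z : z ^ t = z ^ (k - 1 - s) * z ^ (t + s + 1 - k) := by
    rw [← pow_add]
    congr 1
    omega
  rw [exponent_b, exponent_one_sub, exponent_z, mul_pow, mul_pow]
  ring

theorem choose_mul_mul_div_one_sub_pow [CharZero K] {m j t : ℕ} (hjt : j ≤ t) (htm : t ≤ m)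
    {x y : K} (e : K) (hy : 1 - y ≠ 0) :
    (m.choose (m - t) : K) * (x ^ j / j ! * e * (y ^ (t - j) / (1 - y) ^ (t - j + 1))) =
      m ! * e / (1 - y) ^ (m + 1) *
        (x ^ j * y ^ (t - j) / (j ! * (m - t)! * t !) * (1 - y) ^ (m + j - t)) := by
  have split_pow : (1 - y) ^ (m + 1) = (1 - y) ^ (t - j + 1) * (1 - y) ^ (m + j - t) := by
    rw [← pow_add]
    congr 1
    omega
  rw [Nat.choose_symm htm, Nat.cast_choose K htm, split_pow]
  field_simp

end Numerator

theorem hasSum_choose_mul_sum_pow_div_factorial_mul_pow {𝕜 : Type*} [NormedField 𝕜]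
    [NormedAlgebra ℚ 𝕜] [CompleteSpace 𝕜] (m : ℕ) (x : 𝕜) {y : 𝕜} (hy : ‖y‖ < 1) :
    HasSum
      (fun s => ((s + m).choose m : 𝕜) * ∑ i ∈ range (s + 1), x ^ i / i ! * y ^ (s - i))
      (m ! * NormedSpace.exp x / (1 - y) ^ (m + 1) * hadamardNumerator m x y) := by
  have := algebraRat.charZero 𝕜
  have one_sub_ne_zero : 1 - y ≠ 0 := (isUnit_one_sub_of_norm_lt_one hy).ne_zero
  convert! hasSum_choose_mul_sum_range_mul (summable_norm_choose_mul_pow_div_factorial · x)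
    (summable_norm_choose_mul_pow · hy) m m using 1
  simp only [hadamardNumerator, mul_sum, (hasSum_choose_mul_pow_div_factorial _ x).tsum_eq,
    (hasSum_choose_mul_pow _ hy).tsum_eq]
  refine sum_congr rfl fun j _ => sum_congr rfl fun t ht => ?_
  obtain ⟨hjt, htm⟩ := mem_Icc.mp ht
  exact (choose_mul_mul_div_one_sub_pow hjt htm _ one_sub_ne_zero).symm

theorem stmt_11_general {𝕜 : Type*} [NormedField 𝕜] [NormedAlgebra ℚ 𝕜] [CompleteSpace 𝕜]
    (k : ℕ) (hk : 1 ≤ k) (β γ δ : 𝕜) (c : ℕ → 𝕜)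
    (hc : ∀ s, c s = ∑ j ∈ range (s + 1), γ ^ j / j ! * δ ^ (s - j))
    (z : 𝕜) (hz : ‖δ * β * z‖ < 1) :
    HasSum (fun s => ((s + k - 1).choose (k - 1) : 𝕜) * β ^ s * c s * z ^ s)
      ((k - 1)! * NormedSpace.exp (γ * β * z) / (1 - δ * β * z) ^ k *
        ∑ s ∈ range k, ∑ t ∈ Icc (k - s - 1) (k - 1),
          (γ * β) ^ (k - 1 - s) * (δ * β) ^ (t + s + 1 - k) /
              ((k - 1 - s)! * (k - 1 - t)! * t !) *
            z ^ t * (1 - δ * β * z) ^ (2 * k - t - s - 2)) := by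
  have rescale (s : ℕ) : β ^ s * c s * z ^ s =
      ∑ i ∈ range (s + 1), (γ * β * z) ^ i / i ! * (δ * β * z) ^ (s - i) := by
    rw [hc, mul_sum, sum_mul]
    refine sum_congr rfl fun i hi => ?_
    rw [← Nat.add_sub_cancel' (Nat.lt_succ_iff.mp (mem_range.mp hi)), Nat.add_sub_cancel_left]
    ring
  have closed_form :=
    hasSum_choose_mul_sum_pow_div_factorial_mul_pow (k - 1) (γ * β * z) hz
  rw [hadamardNumerator_mul_mul hk, Nat.sub_add_cancel hk] at closed_form
  simpa only [← rescale, ← Nat.add_sub_assoc hk, ← mul_assoc] using closed_form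

/-- the Hadamard product of `A_{k,β}(z) = (1-βz)^{-k}` (Taylor
coefficients `C(s+k-1, k-1) β^s`) and `F_{γ,δ}(z) = e^{γz}/(1-δz)` (Taylor
coefficients `c_s = ∑_{j=0}^s γ^j/j! · δ^{s-j}`) equals
`(k-1)! e^{γβz}/(1-δβz)^k · Q_{2k-2}(z)` for `|z| < 1/(δβ)`, where `Q_{2k-2}` is the
explicit polynomial of degree at most `2k-2` from the paper. -/
theorem stmt_11 (k : ℕ) (hk : 2 ≤ k) (β γ δ : ℝ) (hβ : 0 < β) (hγ : 0 < γ) (hδ : 0 < δ)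
    (c : ℕ → ℝ)
    (hc : ∀ s : ℕ, c s = ∑ j ∈ Finset.range (s + 1),
      γ ^ j / (Nat.factorial j) * δ ^ (s - j)) :
    ∀ z : ℂ, ‖z‖ < 1 / (δ * β) →
      ∑' s : ℕ, (((s + k - 1).choose (k - 1) : ℂ) * (β : ℂ) ^ s * (c s : ℂ)) * z ^ s
        = ((Nat.factorial (k - 1) : ℂ) * Complex.exp ((γ : ℂ) * (β : ℂ) * z)
              / (1 - (δ : ℂ) * (β : ℂ) * z) ^ k)
          * ∑ s ∈ Finset.range k, ∑ t ∈ Finset.Icc (k - s - 1) (k - 1),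
              (((γ * β) ^ (k - 1 - s) * (δ * β) ^ (t + s + 1 - k)
                / ((Nat.factorial (k - 1 - s)) * (Nat.factorial (k - 1 - t))
                    * (Nat.factorial t)) : ℝ) : ℂ)
                * z ^ t * (1 - (δ : ℂ) * (β : ℂ) * z) ^ (2 * k - t - s - 2) := by
  intro z hz
  have norm_lt_one : ‖(δ * β * z : ℂ)‖ < 1 := by
    rw [lt_div_iff₀' (mul_pos hδ hβ)] at hz
    simpa [abs_of_pos hδ, abs_of_pos hβ] using hz
  have closed_form := stmt_11_general k (by omega) (β : ℂ) γ δ (fun s => c s)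
    (fun s => by simp [hc]) z norm_lt_one
  rw [closed_form.tsum_eq, Complex.exp_eq_exp_ℂ]
  push_cast
  rfl
end

section
/- Let (q_k)_{k=2}^∞ be positive reals and define the sequence (c_k)_{k=0}^∞ by c_0 = c_1 = 1 and c_k = 1/(q_2^{k−1} q_3^{k−2} ⋯ q_{k−1}^2 q_k) for k ≥ 2. If (c_k)_{k=0}^∞ is a totally positive sequence, then q_2 ≥ 1, q_3 ≥ 1, and q_2^2 q_3 − 2 q_2 q_3 + 1 ≥ 0. -/
/-!
Total positivity enters only through minors of order at most three. The minor on rows `0, 1` and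
columns `k + 1, k + 2` says that the sequence is log-concave, which for `c` means `q_k ≥ 1`,
because the `q_k` are its second quotients `c_{k-1}^2 / (c_{k-2} c_k)`. The minor on rows `0, 1, 2`
and columns `1, 2, 3` equals `1 - 2 / q_2 + 1 / (q_2^2 q_3)`, which gives the remaining inequality.
-/

theorem IsTotallyPositive.isMultiplyPositive {a : ℕ → ℝ} (h : IsTotallyPositive a) (m : ℕ) :
    IsMultiplyPositive m a :=
  fun n _ ↦ h n

namespace IsMultiplyPositive

variable {a : ℕ → ℝ}

theorem mono {m n : ℕ} (h : IsMultiplyPositive n a) (hmn : m ≤ n) : IsMultiplyPositive m a :=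
  fun r hr ↦ h r (hr.trans hmn)

theorem mul_le_sq (h : IsMultiplyPositive 2 a) (k : ℕ) : a k * a (k + 2) ≤ a (k + 1) ^ 2 := by
  have minor_nonneg : 0 ≤ a (k + 1) * a (k + 1) - a (k + 2) * a k := by
    simpa [Matrix.det_fin_two] using h 2 le_rfl ![0, 1] ![k + 1, k + 2]
      (by decide) (by simp [Fin.strictMono_iff_lt_succ])
  linarith

theorem cubic_nonneg (h : IsMultiplyPositive 3 a) :
    0 ≤ a 1 ^ 3 - 2 * a 0 * a 1 * a 2 + a 0 ^ 2 * a 3 := by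
  have minor_nonneg : 0 ≤
      a 1 * a 1 * a 1 - a 1 * a 2 * a 0 - a 2 * a 0 * a 1 + a 3 * a 0 * a 0 := by
    simpa [Matrix.det_fin_three] using
      h 3 le_rfl ![0, 1, 2] ![1, 2, 3] (by decide) (by decide)
  linarith

end IsMultiplyPositive

/-- The product `q_2^{k-1} q_3^{k-2} ⋯ q_{k-1}^2 q_k`, whose inverse is the `k`-th term of the
sequence with second quotients `q_2, q_3, …` and first two terms `1`. It is empty for `k ≤ 1`. -/
def secondQuotientProd {M : Type*} [CommMonoid M] (q : ℕ → M) (k : ℕ) : M :=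
  ∏ j ∈ Finset.Icc 2 k, q j ^ (k + 1 - j)

namespace secondQuotientProd

section CommMonoid

variable {M : Type*} [CommMonoid M] (q : ℕ → M)

@[simp]
theorem zero : secondQuotientProd q 0 = 1 := by simp [secondQuotientProd]

@[simp]
theorem one : secondQuotientProd q 1 = 1 := by simp [secondQuotientProd]

theorem succ (k : ℕ) :
    secondQuotientProd q (k + 1) = secondQuotientProd q k * ∏ j ∈ Finset.Icc 2 (k + 1), q j := by
  have extend_range : secondQuotientProd q k = ∏ j ∈ Finset.Icc 2 (k + 1), q j ^ (k + 1 - j) := by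
    refine Finset.prod_subset (Finset.Icc_subset_Icc_right k.le_succ) fun j hj hj' ↦ ?_
    obtain rfl : j = k + 1 := by grind
    simp
  rw [extend_range, ← Finset.prod_mul_distrib]
  refine Finset.prod_congr rfl fun j hj ↦ ?_
  rw [← pow_succ, Nat.sub_add_comm (Finset.mem_Icc.mp hj).2]

theorem mul_add_two (k : ℕ) :
    secondQuotientProd q k * secondQuotientProd q (k + 2) =
      secondQuotientProd q (k + 1) ^ 2 * q (k + 2) := by
  rw [succ q (k + 1), Finset.prod_Icc_succ_top (by lia), sq, succ q k]
  ac_rfl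

end CommMonoid

variable {q : ℕ → ℝ}

theorem pos (hq : ∀ k, 2 ≤ k → 0 < q k) (k : ℕ) : 0 < secondQuotientProd q k :=
  Finset.prod_pos fun j hj ↦ pow_pos (hq j (Finset.mem_Icc.mp hj).1) _

theorem one_le_of_isMultiplyPositive_two (hq : ∀ k, 2 ≤ k → 0 < q k)
    (h : IsMultiplyPositive 2 fun k ↦ (secondQuotientProd q k)⁻¹) {k : ℕ} (hk : 2 ≤ k) :
    1 ≤ q k := by
  obtain ⟨k, rfl⟩ := Nat.exists_eq_add_of_le' hk
  have sq_pos : 0 < secondQuotientProd q (k + 1) ^ 2 := pow_pos (pos hq _) 2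
  have sq_le : secondQuotientProd q (k + 1) ^ 2 ≤ secondQuotientProd q (k + 1) ^ 2 * q (k + 2) := by
    rw [← mul_add_two, ← inv_le_inv₀ (mul_pos (pos hq _) (pos hq _)) sq_pos, mul_inv, ← inv_pow]
    exact h.mul_le_sq k
  exact (le_mul_iff_one_le_right sq_pos).mp sq_le

theorem cubic_nonneg_of_isMultiplyPositive_three (h2 : 0 < q 2) (h3 : 0 < q 3)
    (h : IsMultiplyPositive 3 fun k ↦ (secondQuotientProd q k)⁻¹) :
    0 ≤ q 2 ^ 2 * q 3 - 2 * (q 2 * q 3) + 1 := by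
  have prod_two : secondQuotientProd q 2 = q 2 := by simpa using mul_add_two q 0
  have prod_three : secondQuotientProd q 3 = q 2 ^ 2 * q 3 := by
    simpa [prod_two] using mul_add_two q 1
  have minor_nonneg : 0 ≤ 1 - 2 * (q 2)⁻¹ + (q 2 ^ 2 * q 3)⁻¹ := by
    simpa only [zero, one, prod_two, prod_three, inv_one, one_pow, one_mul, mul_one]
      using h.cubic_nonneg
  calc
    0 ≤ q 2 ^ 2 * q 3 * (1 - 2 * (q 2)⁻¹ + (q 2 ^ 2 * q 3)⁻¹) := by positivity
    _ = q 2 ^ 2 * q 3 - 2 * (q 2 * q 3) + 1 := by field_simp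

end secondQuotientProd

theorem stmt_14_general (q : ℕ → ℝ) (hq : ∀ k, 2 ≤ k → 0 < q k) (c : ℕ → ℝ)
    (hc0 : c 0 = 1) (hc1 : c 1 = 1)
    (hck : ∀ k, 2 ≤ k → c k = 1 / ∏ j ∈ Finset.Icc 2 k, q j ^ (k + 1 - j))
    (htp : IsMultiplyPositive 3 c) :
    (∀ k, 2 ≤ k → 1 ≤ q k) ∧ 0 ≤ q 2 ^ 2 * q 3 - 2 * (q 2 * q 3) + 1 := by
  obtain rfl : c = fun k ↦ (secondQuotientProd q k)⁻¹ := by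
    funext k
    match k with
    | 0 => simp [hc0]
    | 1 => simp [hc1]
    | k + 2 => rw [hck _ (by lia), one_div, secondQuotientProd]
  exact ⟨fun _ ↦ secondQuotientProd.one_le_of_isMultiplyPositive_two hq (htp.mono (by norm_num)),
    secondQuotientProd.cubic_nonneg_of_isMultiplyPositive_three (hq 2 le_rfl) (hq 3 (by norm_num))
      htp⟩

/-- necessary conditions on the parameters `q_k` for the sequence
`c_0 = c_1 = 1`, `c_k = 1/(q_2^{k-1} q_3^{k-2} ⋯ q_k)` to be totally positive. -/
theorem stmt_14 (q : ℕ → ℝ) (hq : ∀ k, 2 ≤ k → 0 < q k) (c : ℕ → ℝ)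
    (hc0 : c 0 = 1) (hc1 : c 1 = 1)
    (hck : ∀ k, 2 ≤ k → c k = 1 / ∏ j ∈ Finset.Icc 2 k, q j ^ (k + 1 - j))
    (htp : IsTotallyPositive c) :
    1 ≤ q 2 ∧ 1 ≤ q 3 ∧ 0 ≤ q 2 ^ 2 * q 3 - 2 * (q 2 * q 3) + 1 := by
  obtain ⟨one_le, cubic⟩ := stmt_14_general q hq c hc0 hc1 hck (htp.isMultiplyPositive 3)
  exact ⟨one_le 2 le_rfl, one_le 3 (by norm_num), cubic⟩
end

section
/- Let a > 0, b > 0, and assume both polynomials P(x) = 1 + x + x^2/a + x^3/(a^2 b) and T(x) = x + x^2/a + x^3/(a^2 b) have only real (necessarily nonpositive) zeros. Then for every totally positive sequence (c_k)_{k=0}^∞, the sequence (c_0, c_1, c_2/a, c_3/(a^2 b), 0, 0, 0, ...) is totally positive. -/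
/-!
A cubic splits over `ℝ` if and only if its discriminant is nonnegative, and a split polynomial with
nonnegative coefficients is a nonnegative constant times a product of factors `X + r` with `r ≥ 0`,
each of which preserves total positivity of the coefficients. So it suffices to show that a
discriminant is nonnegative.

Divided by `β² γ²`, the discriminant of `α x³ + β x² + γ x + δ` is a function `F (p, q)` of
`p = β δ / γ²` and `q = α γ / β²`. Multiplying the coefficient of `xᵏ` by `cₖ` turns `(p, q)` into
`(u p, w q)` with `u = c₀ c₂ / c₁²` and `w = c₁ c₃ / c₂²`. The `2 × 2` minors of the sequence give
`u, w ≤ 1` and a `3 × 3` minor gives `2 u - 1 ≤ u² w`. Real-rootedness of `P` and `T` means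
`F (p, q) ≥ 0` and `q ≤ 1 / 4`, so concavity of `F` in `p` preserves `F ≥ 0` when `p` is replaced by
`u p`. If `u p ≤ 1 / 4`, concavity in `q` does the same for `w`. Otherwise `u` is close to `1`, and
`1 - w ≤ ((1 - u) / u)²` is so small that the loss from `w` is outweighed by the gain from `u`.
-/

open Polynomial

/-- The infinite upper triangular Toeplitz matrix `(a_{j-i})` of a sequence; `IsTotallyPositive a`
says that all its finite minors are nonnegative. -/
def toeplitz (a : ℕ → ℝ) : Matrix ℕ ℕ ℝ :=
  .of fun i j => if i ≤ j then a (j - i) else 0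

theorem isTotallyPositive_iff {a : ℕ → ℝ} :
    IsTotallyPositive a ↔ ∀ (n : ℕ) (i j : Fin n → ℕ), StrictMono i → StrictMono j →
      0 ≤ ((toeplitz a).submatrix i j).det :=
  Iff.rfl

/-! ### Real-rooted polynomials with nonnegative coefficients -/

theorem toeplitz_coeff_C (r : ℝ) : toeplitz (C r).coeff = r • (1 : Matrix ℕ ℕ ℝ) := by
  ext i j
  simp only [toeplitz, Matrix.of_apply, coeff_C, Matrix.smul_apply, Matrix.one_apply, smul_eq_mul]
  grind

theorem det_submatrix_one_nonneg {n : ℕ} {i j : Fin n → ℕ} (hi : StrictMono i)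
    (hj : StrictMono j) : 0 ≤ ((1 : Matrix ℕ ℕ ℝ).submatrix i j).det := by
  by_cases h : ∀ p, ∃ q, j q = i p
  · choose f hf using h
    have hf_inj : Function.Injective f := fun p q hpq => hi.injective (by rw [← hf, ← hf, hpq])
    have hrange : Set.range i = Set.range j := by
      rw [← (Finite.surjective_of_injective hf_inj).range_comp j]
      exact congrArg Set.range (funext hf).symm
    obtain rfl := (hi.range_inj hj).1 hrange
    rw [Matrix.submatrix_one i hi.injective, Matrix.det_one]
    exact zero_le_one
  · push Not at h
    obtain ⟨p, hp⟩ := h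
    refine (Matrix.det_eq_zero_of_row_eq_zero p fun q => ?_).ge
    rw [Matrix.submatrix_apply, Matrix.one_apply_ne (hp q).symm]

theorem isTotallyPositive_coeff_C {r : ℝ} (hr : 0 ≤ r) : IsTotallyPositive (C r).coeff := by
  refine isTotallyPositive_iff.2 fun n i j hi hj => ?_
  rw [toeplitz_coeff_C, Matrix.submatrix_smul, Pi.smul_apply, Pi.smul_apply, Matrix.det_smul]
  exact mul_nonneg (pow_nonneg hr _) (det_submatrix_one_nonneg hi hj)

theorem IsTotallyPositive.det_submatrix_nonneg_of_monotone {a : ℕ → ℝ} (ha : IsTotallyPositive a)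
    {n : ℕ} {i j : Fin n → ℕ} (hi : Monotone i) (hj : StrictMono j) :
    0 ≤ ((toeplitz a).submatrix i j).det := by
  by_cases hinj : Function.Injective i
  · exact ha n i j (hi.strictMono_of_injective hinj) hj
  · obtain ⟨p, q, hpq, hne⟩ := Function.not_injective_iff.1 hinj
    refine (Matrix.det_zero_of_row_eq hne ?_).ge
    funext r
    rw [Matrix.submatrix_apply, Matrix.submatrix_apply, hpq]

theorem toeplitz_coeff_X_add_C_mul (r : ℝ) (f : ℝ[X]) (i j : ℕ) :
    toeplitz ((X + C r) * f).coeff i j =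
      toeplitz f.coeff (i + 1) j + r * toeplitz f.coeff i j := by
  simp only [toeplitz, Matrix.of_apply, add_mul, coeff_add, coeff_C_mul]
  rcases lt_trichotomy i j with hij | rfl | hij
  · obtain ⟨k, rfl⟩ := Nat.exists_eq_add_of_lt hij
    rw [if_pos hij.le, if_pos (Nat.succ_le_of_lt hij), if_pos hij.le,
      show i + k + 1 - i = k + 1 by omega, show i + k + 1 - (i + 1) = k by omega, coeff_X_mul]
  · simp
  · rw [if_neg (by omega), if_neg (by omega), if_neg (by omega), mul_zero, add_zero]

/-- Each row of the Toeplitz matrix of `(X + r) f` combines two consecutive rows of that of `f`, so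
its minors expand into nonnegative combinations of minors of `f` with weakly increasing rows. -/
theorem IsTotallyPositive.coeff_X_add_C_mul {r : ℝ} (hr : 0 ≤ r) {f : ℝ[X]}
    (hf : IsTotallyPositive f.coeff) : IsTotallyPositive ((X + C r) * f).coeff := by
  refine isTotallyPositive_iff.2 fun n i j hi hj => ?_
  set row : ℕ → Fin n → ℝ := fun k q => toeplitz f.coeff k (j q)
  have hrows : (toeplitz ((X + C r) * f).coeff).submatrix i j =
      (fun p => row (i p + 1)) + fun p => r • row (i p) := by
    ext p q
    exact toeplitz_coeff_X_add_C_mul r f (i p) (j q)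
  rw [hrows]
  change 0 ≤ Matrix.detRowAlternating.toMultilinearMap _
  rw [MultilinearMap.map_add_univ]
  refine Finset.sum_nonneg fun s _ => ?_
  set i' : Fin n → ℕ := fun p => if p ∈ s then i p + 1 else i p with hi'
  have hpiecewise : s.piecewise (fun p => row (i p + 1)) (fun p => r • row (i p)) =
      fun p => (if p ∈ s then 1 else r) • row (i' p) := by
    funext p
    by_cases hp : p ∈ s <;> simp [hp, hi']
  have hi'_mono : Monotone i' := by
    refine monotone_iff_forall_lt.2 fun p q hpq => ?_
    have := hi hpq
    simp only [hi']
    split_ifs <;> omega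
  rw [hpiecewise, MultilinearMap.map_smul_univ]
  refine smul_nonneg (Finset.prod_nonneg fun p _ => ?_)
    (hf.det_submatrix_nonneg_of_monotone hi'_mono hj)
  split_ifs
  exacts [zero_le_one, hr]

theorem isTotallyPositive_coeff_C_mul_prod_X_add_C {k : ℝ} (hk : 0 ≤ k) {s : Multiset ℝ}
    (hs : ∀ r ∈ s, 0 ≤ r) : IsTotallyPositive (C k * (s.map (X + C ·)).prod).coeff := by
  induction s using Multiset.induction_on with
  | empty => simpa using isTotallyPositive_coeff_C hk
  | cons r s ih =>
    rw [Multiset.map_cons, Multiset.prod_cons, mul_left_comm]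
    exact (ih fun t ht => hs t (Multiset.mem_cons_of_mem ht)).coeff_X_add_C_mul
      (hs r (Multiset.mem_cons_self r s))

theorem nonpos_of_isRoot_of_coeff_nonneg {f : ℝ[X]} (hf0 : f ≠ 0) (hf : ∀ k, 0 ≤ f.coeff k)
    {x : ℝ} (hx : f.IsRoot x) : x ≤ 0 := by
  by_contra! hpos
  have hlead : 0 < f.coeff f.natDegree * x ^ f.natDegree :=
    mul_pos ((hf _).lt_of_ne' (leadingCoeff_ne_zero.2 hf0)) (pow_pos hpos _)
  have hle : f.coeff f.natDegree * x ^ f.natDegree ≤ f.eval x := by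
    rw [eval_eq_sum_range]
    exact Finset.single_le_sum (f := fun k => f.coeff k * x ^ k)
      (fun k _ => mul_nonneg (hf k) (pow_nonneg hpos.le k)) (Finset.self_mem_range_succ _)
  exact (hlead.trans_le hle).ne' hx

theorem isTotallyPositive_coeff_of_splits {f : ℝ[X]} (hsplits : f.Splits)
    (hf : ∀ k, 0 ≤ f.coeff k) : IsTotallyPositive f.coeff := by
  rcases eq_or_ne f 0 with rfl | hf0
  · simpa using isTotallyPositive_coeff_C le_rfl
  obtain ⟨s, hs⟩ := splits_iff_exists_multiset'.1 hsplits
  rw [hs]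
  refine isTotallyPositive_coeff_C_mul_prod_X_add_C (hf _) fun r hr => ?_
  have hroot : f.IsRoot (-r) := by
    rw [← dvd_iff_isRoot, C_neg, sub_neg_eq_add, hs]
    exact (Multiset.dvd_prod (Multiset.mem_map_of_mem _ hr)).mul_left _
  exact neg_nonpos.1 (nonpos_of_isRoot_of_coeff_nonneg hf0 hf hroot)

/-! ### Real cubics and their discriminants -/

theorem splits_of_forall_aeval_eq_zero_im_eq_zero {f : ℝ[X]}
    (h : ∀ z : ℂ, aeval z f = 0 → z.im = 0) : f.Splits := by
  refine Splits.of_splits_map_of_injective (algebraMap ℝ ℂ).injective (IsAlgClosed.splits _)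
    fun z hz => ⟨z.re, ?_⟩
  have hz0 : aeval z f = 0 := by
    rw [aeval_def, ← eval_map]
    exact isRoot_of_mem_roots hz
  exact Complex.ext rfl (h z hz0).symm

theorem aeval_toPoly {R A : Type*} [CommSemiring R] [CommSemiring A] [Algebra R A] (P : Cubic R)
    (x : A) : aeval x P.toPoly = algebraMap R A P.a * x ^ 3 + algebraMap R A P.b * x ^ 2 +
      algebraMap R A P.c * x + algebraMap R A P.d := by
  simp only [Cubic.toPoly, map_add, map_mul, map_pow, aeval_C, aeval_X]

theorem cubic_eq_of_quadratic_dvd {R : Type*} [CommRing R] [Nontrivial R] {t s : R}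
    {P : Cubic R} (h : X ^ 2 - C t * X + C s ∣ P.toPoly) :
    ∃ m n : R, P = ⟨m, n - t * m, s * m - t * n, s * n⟩ := by
  obtain ⟨g, hg⟩ := h
  have hmonic : (X ^ 2 - C t * X + C s : R[X]).Monic := by monicity!
  have hg_deg : g.natDegree ≤ 1 := by
    rcases eq_or_ne g 0 with rfl | hg0
    · simp
    have hquad : (X ^ 2 - C t * X + C s : R[X]).natDegree = 2 := by compute_degree!
    have hle : P.toPoly.natDegree ≤ 3 := natDegree_cubic_le
    rw [hg, hmonic.natDegree_mul' hg0, hquad] at hle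
    omega
  obtain ⟨m, n, rfl⟩ := exists_eq_X_add_C_of_natDegree_le_one hg_deg
  refine ⟨m, n, (Cubic.toPoly_injective _ _).1 (hg.trans ?_)⟩
  simp only [Cubic.toPoly, C_sub, C_mul]
  ring

theorem discr_neg_of_not_splits {P : Cubic ℝ} (h : ¬P.toPoly.Splits) : P.discr < 0 := by
  obtain ⟨z, hz, him⟩ : ∃ z : ℂ, aeval z P.toPoly = 0 ∧ z.im ≠ 0 := by
    contrapose! h
    exact splits_of_forall_aeval_eq_zero_im_eq_zero h
  obtain ⟨m, n, rfl⟩ := cubic_eq_of_quadratic_dvd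
    (quadratic_dvd_of_aeval_eq_zero_im_ne_zero P.toPoly hz him)
  have hmn : n + z.re * m ≠ 0 ∨ z.im * m ≠ 0 := by
    by_contra! hmn
    obtain ⟨hn, hm⟩ := hmn
    obtain rfl := (mul_eq_zero.1 hm).resolve_left him
    obtain rfl : n = 0 := by simpa using hn
    exact h (by simp [Cubic.toPoly])
  have hdiscr : (⟨m, n - 2 * z.re * m, ‖z‖ ^ 2 * m - 2 * z.re * n, ‖z‖ ^ 2 * n⟩ : Cubic ℝ).discr =
      -(2 * z.im * ((n + z.re * m) ^ 2 + (z.im * m) ^ 2)) ^ 2 := by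
    rw [Cubic.discr, Complex.sq_norm, Complex.normSq_apply]
    ring
  have hpos : 0 < (n + z.re * m) ^ 2 + (z.im * m) ^ 2 := by
    rcases hmn with hn | hm <;> positivity
  rw [hdiscr, neg_lt_zero]
  positivity

theorem discr_nonneg_of_splits {P : Cubic ℝ} (ha : P.a ≠ 0) (h : P.toPoly.Splits) :
    0 ≤ P.discr := by
  have hmap : (P.toPoly.map (RingHom.id ℝ)).Splits := by rwa [Polynomial.map_id]
  obtain ⟨x, y, z, hroots⟩ := (Cubic.splits_iff_roots_eq_three ha).1 hmap
  have hdiscr := Cubic.discr_eq_prod_three_roots ha hroots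
  rw [RingHom.id_apply] at hdiscr
  rw [hdiscr]
  exact sq_nonneg _

/-! ### The normalized discriminant -/

section NormalizedDiscriminant

variable {K : Type*} [Field K]

/-- The discriminant of a cubic `a x³ + b x² + c x + d` divided by `b² c²`, as a function of the
scaling-invariant ratios `p = b d / c²` and `q = a c / b²`. -/
def normalizedDiscr (p q : K) : K :=
  1 - 4 * p - 4 * q + 18 * p * q - 27 * p ^ 2 * q ^ 2

theorem discr_eq_mul_normalizedDiscr {P : Cubic K} (hb : P.b ≠ 0) (hc : P.c ≠ 0) :
    P.discr = P.b ^ 2 * P.c ^ 2 * normalizedDiscr (P.b * P.d / P.c ^ 2) (P.a * P.c / P.b ^ 2) := by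
  rw [Cubic.discr, normalizedDiscr]
  field_simp
  ring

theorem normalizedDiscr_comm (p q : K) : normalizedDiscr p q = normalizedDiscr q p := by
  simp only [normalizedDiscr]
  ring

-- `normalizedDiscr` is concave in `p` with value `1 - 4 * q` at `p = 0`; the last summand is its
-- excess over the chord.
theorem normalizedDiscr_mul_left (u p q : K) :
    normalizedDiscr (u * p) q = (1 - u) * (1 - 4 * q) + u * normalizedDiscr p q +
      27 * u * (1 - u) * p ^ 2 * q ^ 2 := by
  simp only [normalizedDiscr]
  ring

variable [LinearOrder K] [IsStrictOrderedRing K] {p q u w : K}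

theorem normalizedDiscr_mul_left_nonneg (hq : q ≤ 1 / 4) (h : 0 ≤ normalizedDiscr p q)
    (hu0 : 0 ≤ u) (hu1 : u ≤ 1) : 0 ≤ normalizedDiscr (u * p) q := by
  have : 0 ≤ 1 - u := sub_nonneg.2 hu1
  have hq' : 0 ≤ 1 - 4 * q := by linarith
  rw [normalizedDiscr_mul_left]
  positivity

theorem normalizedDiscr_mul_right_nonneg (hp : p ≤ 1 / 4) (h : 0 ≤ normalizedDiscr p q)
    (hw0 : 0 ≤ w) (hw1 : w ≤ 1) : 0 ≤ normalizedDiscr p (w * q) := by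
  rw [normalizedDiscr_comm] at h ⊢
  exact normalizedDiscr_mul_left_nonneg hp h hw0 hw1

theorem le_one_third_of_normalizedDiscr_nonneg (h : 0 ≤ normalizedDiscr p q) : p ≤ 1 / 3 := by
  have hid : 4 * (1 - 3 * p) ^ 3 =
      27 * p ^ 2 * normalizedDiscr p q + (2 - 9 * p + 27 * p ^ 2 * q) ^ 2 := by
    rw [normalizedDiscr]
    ring
  have hcube : 0 ≤ (1 - 3 * p) ^ 3 := by
    have : 0 ≤ 4 * (1 - 3 * p) ^ 3 := hid ▸ by positivity
    linarith
  have : 0 ≤ 1 - 3 * p := (Odd.pow_nonneg_iff (by decide)).1 hcube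
  linarith

theorem le_eight_div_of_normalizedDiscr_nonneg (hq : q ≤ 1 / 4)
    (h : 0 ≤ normalizedDiscr p q) : p ≤ 8 / 27 := by
  by_contra! hp
  have hp3 := le_one_third_of_normalizedDiscr_nonneg h
  have hexpand : normalizedDiscr p q = 27 / 16 * p * (8 / 27 - p) -
      (1 / 4 - q) * (18 * p - 4 - 27 / 2 * p ^ 2) - 27 * p ^ 2 * (1 / 4 - q) ^ 2 := by
    rw [normalizedDiscr]
    ring
  have hvalue : 27 / 16 * p * (8 / 27 - p) < 0 :=
    mul_neg_of_pos_of_neg (by linarith) (by linarith)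
  have hslope : 0 ≤ 18 * p - 4 - 27 / 2 * p ^ 2 := by nlinarith
  have hlinear := mul_nonneg (sub_nonneg.2 hq) hslope
  have hquad : 0 ≤ 27 * p ^ 2 * (1 / 4 - q) ^ 2 := by positivity
  linarith

theorem normalizedDiscr_mul_mul_nonneg (hq0 : 0 ≤ q) (hq : q ≤ 1 / 4)
    (h : 0 ≤ normalizedDiscr p q) (hu0 : 0 ≤ u) (hu1 : u ≤ 1) (hw0 : 0 ≤ w) (hw1 : w ≤ 1)
    (huw : 2 * u - 1 ≤ u ^ 2 * w) : 0 ≤ normalizedDiscr (u * p) (w * q) := by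
  rcases le_or_gt (u * p) (1 / 4) with hup | hup
  · exact normalizedDiscr_mul_right_nonneg hup (normalizedDiscr_mul_left_nonneg hq h hu0 hu1)
      hw0 hw1
  have hp : p ≤ 8 / 27 := le_eight_div_of_normalizedDiscr_nonneg hq h
  have hup' : u * p ≤ 8 / 27 := by nlinarith
  have hu : 5 / 6 ≤ u := by nlinarith
  have hu1' : 0 ≤ 1 - u := sub_nonneg.2 hu1
  have : 0 ≤ 1 - w := sub_nonneg.2 hw1
  have hw : 1 - w ≤ (1 - u) / 4 := by
    have hu2 : 4 * (1 - u) ≤ u ^ 2 := by nlinarith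
    have : u ^ 2 * (1 - w) ≤ u ^ 2 * ((1 - u) / 4) := by nlinarith
    exact le_of_mul_le_mul_left this (by positivity)
  have hgain : (1 - u) * (1 - 4 * q + 27 / 16 * q ^ 2) ≤ normalizedDiscr (u * p) q := by
    have hup2 : 1 / 16 ≤ u * p ^ 2 := by nlinarith
    have : 27 * (1 - u) * q ^ 2 * (1 / 16) ≤ 27 * (1 - u) * q ^ 2 * (u * p ^ 2) := by gcongr
    have := mul_nonneg hu0 h
    rw [normalizedDiscr_mul_left]
    linarith
  have hloss : (1 - w) * q * (18 * (u * p) - 4) ≤ (1 - u) * (q / 3) := by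
    calc (1 - w) * q * (18 * (u * p) - 4) ≤ (1 - u) / 4 * q * (4 / 3) := by
          gcongr
          · linarith
          · linarith
      _ = (1 - u) * (q / 3) := by ring
  have hmargin : 0 ≤ (1 - u) * (1 - 13 / 3 * q + 27 / 16 * q ^ 2) :=
    mul_nonneg hu1' (by nlinarith)
  calc 0 ≤ normalizedDiscr (u * p) q - (1 - w) * q * (18 * (u * p) - 4) := by linarith
    _ ≤ normalizedDiscr (u * p) q - (1 - w) * q * (18 * (u * p) - 4) +
        27 * (1 - w) * (1 + w) * (u * p) ^ 2 * q ^ 2 := le_add_of_nonneg_right (by positivity)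
    _ = normalizedDiscr (u * p) (w * q) := by
      simp only [normalizedDiscr]
      ring

end NormalizedDiscriminant

/-! ### Sequences satisfying finitely many positivity conditions -/

namespace IsMultiplyPositive

variable {m : ℕ} {c : ℕ → ℝ}

theorem nonneg (hc : IsMultiplyPositive m c) (hm : 1 ≤ m) (k : ℕ) : 0 ≤ c k := by
  simpa using hc 1 hm ![0] ![k] (Subsingleton.strictMono _) (Subsingleton.strictMono _)

theorem mul_le_mul (hc : IsMultiplyPositive m c) (hm : 2 ≤ m) (k r s : ℕ) :
    c k * c (k + r + s) ≤ c (k + r) * c (k + s) := by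
  rcases r.eq_zero_or_pos with rfl | hr
  · rfl
  rcases s.eq_zero_or_pos with rfl | hs
  · exact (mul_comm _ _).le
  have hsub : k + r + s - r = k + s := by omega
  have hle : r ≤ k + r + s := by omega
  have hminor : 0 ≤ c (k + r) * c (k + s) - c (k + r + s) * c k := by
    simpa [Matrix.det_fin_two, hsub, hle] using
      hc 2 hm ![0, r] ![k + r, k + r + s] (by simpa using hr) (by simpa using hs)
  linarith

theorem two_mul_mul_mul_le (hc : IsMultiplyPositive m c) (hm : 3 ≤ m) :
    2 * c 0 * c 1 * c 2 ≤ c 1 ^ 3 + c 0 ^ 2 * c 3 := by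
  have hminor : 0 ≤ c 1 * c 1 * c 1 - c 1 * c 2 * c 0 - c 2 * c 0 * c 1 + c 3 * c 0 * c 0 := by
    simpa [Matrix.det_fin_three] using hc 3 hm ![0, 1, 2] ![1, 2, 3] (by decide) (by decide)
  linarith

end IsMultiplyPositive

/-! ### The coefficientwise product of a cubic and a sequence -/

/-- The cubic `c₃ a x³ + c₂ b x² + c₁ c x + c₀ d` obtained from `a x³ + b x² + c x + d` by
multiplying the coefficient of `xᵏ` by `cₖ`. -/
def hadamardCubic (c : ℕ → ℝ) (P : Cubic ℝ) : Cubic ℝ :=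
  ⟨c 3 * P.a, c 2 * P.b, c 1 * P.c, c 0 * P.d⟩

theorem coeff_toPoly_hadamardCubic (c : ℕ → ℝ) (P : Cubic ℝ) (k : ℕ) :
    (hadamardCubic c P).toPoly.coeff k = c k * P.toPoly.coeff k := by
  match k with
  | 0 => simp only [Cubic.coeff_eq_d, hadamardCubic]
  | 1 => simp only [Cubic.coeff_eq_c, hadamardCubic]
  | 2 => simp only [Cubic.coeff_eq_b, hadamardCubic]
  | 3 => simp only [Cubic.coeff_eq_a, hadamardCubic]
  | k + 4 => rw [Cubic.coeff_eq_zero (by omega), Cubic.coeff_eq_zero (by omega), mul_zero]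

theorem coeff_toPoly_nonneg {P : Cubic ℝ} (ha : 0 ≤ P.a) (hb : 0 ≤ P.b) (hc : 0 ≤ P.c)
    (hd : 0 ≤ P.d) (k : ℕ) : 0 ≤ P.toPoly.coeff k := by
  match k with
  | 0 => rwa [Cubic.coeff_eq_d]
  | 1 => rwa [Cubic.coeff_eq_c]
  | 2 => rwa [Cubic.coeff_eq_b]
  | 3 => rwa [Cubic.coeff_eq_a]
  | k + 4 => exact (Cubic.coeff_eq_zero (by omega)).ge

theorem discr_hadamardCubic_eq_zero {c : ℕ → ℝ} (hc : IsMultiplyPositive 3 c)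
    (h12 : c 1 * c 2 = 0) (P : Cubic ℝ) : (hadamardCubic c P).discr = 0 := by
  have hnonneg := hc.nonneg (by norm_num)
  have h03 : c 0 * c 3 = 0 := by
    refine le_antisymm ?_ (mul_nonneg (hnonneg 0) (hnonneg 3))
    exact (hc.mul_le_mul (by norm_num) 0 1 2).trans_eq h12
  have h13 : c 1 * (c 1 * c 3) = 0 := by
    refine le_antisymm ?_ (mul_nonneg (hnonneg 1) (mul_nonneg (hnonneg 1) (hnonneg 3)))
    calc c 1 * (c 1 * c 3) ≤ c 1 * (c 2 * c 2) :=
          mul_le_mul_of_nonneg_left (hc.mul_le_mul (by norm_num) 1 1 1) (hnonneg 1)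
      _ = 0 := by rw [← mul_assoc, h12, zero_mul]
  have h02 : c 0 * c 2 * c 2 = 0 := by
    refine le_antisymm ?_ (mul_nonneg (mul_nonneg (hnonneg 0) (hnonneg 2)) (hnonneg 2))
    calc c 0 * c 2 * c 2 ≤ c 1 * c 1 * c 2 :=
          mul_le_mul_of_nonneg_right (hc.mul_le_mul (by norm_num) 0 1 1) (hnonneg 2)
      _ = 0 := by rw [mul_assoc, h12, mul_zero]
  simp only [Cubic.discr, hadamardCubic]
  linear_combination (P.b ^ 2 * P.c ^ 2 * c 1 * c 2) * h12 - 4 * P.a * P.c ^ 3 * c 1 * h13 -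
    4 * P.b ^ 3 * P.d * c 2 * h02 + (18 * P.a * P.b * P.c * P.d * c 1 * c 2 -
    27 * P.a ^ 2 * P.d ^ 2 * c 0 * c 3) * h03

theorem discr_hadamardCubic_nonneg {c : ℕ → ℝ} (hc : IsMultiplyPositive 3 c) {P : Cubic ℝ}
    (ha : 0 ≤ P.a) (hPb : 0 < P.b) (hPc : 0 < P.c) (hac : 4 * (P.a * P.c) ≤ P.b ^ 2)
    (hP : 0 ≤ P.discr) : 0 ≤ (hadamardCubic c P).discr := by
  have hnonneg := hc.nonneg (by norm_num)
  rcases eq_or_ne (c 1 * c 2) 0 with h12 | h12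
  · exact (discr_hadamardCubic_eq_zero hc h12 P).ge
  have hc1 : 0 < c 1 := (hnonneg 1).lt_of_ne' (left_ne_zero_of_mul h12)
  have hc2 : 0 < c 2 := (hnonneg 2).lt_of_ne' (right_ne_zero_of_mul h12)
  have hc0 := hnonneg 0
  have hc3 := hnonneg 3
  have hp : c 2 * P.b * (c 0 * P.d) / (c 1 * P.c) ^ 2 =
      c 0 * c 2 / c 1 ^ 2 * (P.b * P.d / P.c ^ 2) := by
    ring
  have hq : c 3 * P.a * (c 1 * P.c) / (c 2 * P.b) ^ 2 =
      c 1 * c 3 / c 2 ^ 2 * (P.a * P.c / P.b ^ 2) := by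
    ring
  have hnormalized : 0 ≤ normalizedDiscr (P.b * P.d / P.c ^ 2) (P.a * P.c / P.b ^ 2) := by
    rw [discr_eq_mul_normalizedDiscr hPb.ne' hPc.ne'] at hP
    exact nonneg_of_mul_nonneg_right hP (by positivity)
  have hu1 : c 0 * c 2 / c 1 ^ 2 ≤ 1 := by
    rw [div_le_one (by positivity), sq]
    exact hc.mul_le_mul (by norm_num) 0 1 1
  have hw1 : c 1 * c 3 / c 2 ^ 2 ≤ 1 := by
    rw [div_le_one (by positivity), sq]
    exact hc.mul_le_mul (by norm_num) 1 1 1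
  have huw : 2 * (c 0 * c 2 / c 1 ^ 2) - 1 ≤
      (c 0 * c 2 / c 1 ^ 2) ^ 2 * (c 1 * c 3 / c 2 ^ 2) := by
    field_simp
    linarith [hc.two_mul_mul_mul_le le_rfl]
  have hq4 : P.a * P.c / P.b ^ 2 ≤ 1 / 4 := by
    rw [div_le_iff₀ (by positivity)]
    linarith
  rw [discr_eq_mul_normalizedDiscr (mul_pos hc2 hPb).ne' (mul_pos hc1 hPc).ne']
  simp only [hadamardCubic, hp, hq]
  refine mul_nonneg (by positivity) ?_
  exact normalizedDiscr_mul_mul_nonneg (by positivity) hq4 hnormalized (by positivity) hu1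
    (by positivity) hw1 huw

theorem isTotallyPositive_mul_coeff_cubic {c : ℕ → ℝ} (hc : IsMultiplyPositive 3 c) {P : Cubic ℝ}
    (ha : 0 < P.a) (hPb : 0 < P.b) (hPc : 0 < P.c) (hPd : 0 ≤ P.d) (hP : P.toPoly.Splits)
    (hT : (⟨P.a, P.b, P.c, 0⟩ : Cubic ℝ).toPoly.Splits) :
    IsTotallyPositive fun k => c k * P.toPoly.coeff k := by
  have hac : 4 * (P.a * P.c) ≤ P.b ^ 2 := by
    have hdiscr := discr_nonneg_of_splits (P := ⟨P.a, P.b, P.c, 0⟩) ha.ne' hT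
    have hfactor : (⟨P.a, P.b, P.c, 0⟩ : Cubic ℝ).discr =
        P.c ^ 2 * (P.b ^ 2 - 4 * (P.a * P.c)) := by
      rw [Cubic.discr]
      ring
    rw [hfactor] at hdiscr
    exact sub_nonneg.1 (nonneg_of_mul_nonneg_right hdiscr (by positivity))
  have hdiscr := discr_hadamardCubic_nonneg hc ha.le hPb hPc hac (discr_nonneg_of_splits ha.ne' hP)
  have hsplits : (hadamardCubic c P).toPoly.Splits :=
    not_imp_comm.1 discr_neg_of_not_splits hdiscr.not_gt
  simp only [← coeff_toPoly_hadamardCubic]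
  refine isTotallyPositive_coeff_of_splits hsplits fun k => ?_
  rw [coeff_toPoly_hadamardCubic]
  exact mul_nonneg (hc.nonneg (by norm_num) k) (coeff_toPoly_nonneg ha.le hPb.le hPc.le hPd k)

theorem stmt_15_general (a b : ℝ) (ha : 0 < a) (hb : 0 < b)
    (hP : ∀ z : ℂ, 1 + z + z ^ 2 / (a : ℂ) + z ^ 3 / ((a : ℂ) ^ 2 * (b : ℂ)) = 0 →
      ∃ x : ℝ, z = (x : ℂ))
    (hT : ∀ z : ℂ, z + z ^ 2 / (a : ℂ) + z ^ 3 / ((a : ℂ) ^ 2 * (b : ℂ)) = 0 →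
      ∃ x : ℝ, z = (x : ℂ))
    (c : ℕ → ℝ) (hc : IsMultiplyPositive 3 c) :
    IsTotallyPositive (fun k =>
      if k = 0 then c 0 else if k = 1 then c 1 else if k = 2 then c 2 / a
      else if k = 3 then c 3 / (a ^ 2 * b) else 0) := by
  have hP' : (⟨1 / (a ^ 2 * b), 1 / a, 1, 1⟩ : Cubic ℝ).toPoly.Splits := by
    refine splits_of_forall_aeval_eq_zero_im_eq_zero fun z hz => ?_
    obtain ⟨x, rfl⟩ := hP z (by rw [← hz, aeval_toPoly, Complex.coe_algebraMap]; push_cast; ring)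
    exact Complex.ofReal_im x
  have hT' : (⟨1 / (a ^ 2 * b), 1 / a, 1, 0⟩ : Cubic ℝ).toPoly.Splits := by
    refine splits_of_forall_aeval_eq_zero_im_eq_zero fun z hz => ?_
    obtain ⟨x, rfl⟩ := hT z (by rw [← hz, aeval_toPoly, Complex.coe_algebraMap]; push_cast; ring)
    exact Complex.ofReal_im x
  convert isTotallyPositive_mul_coeff_cubic hc (by positivity) (by positivity) one_pos zero_le_one
    hP' hT' using 2 with k
  match k with
  | 0 => simp [Cubic.coeff_eq_d]
  | 1 => simp [Cubic.coeff_eq_c]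
  | 2 => simp [Cubic.coeff_eq_b, div_eq_mul_inv]
  | 3 => simp [Cubic.coeff_eq_a, div_eq_mul_inv]
  | k + 4 => simp [Cubic.coeff_eq_zero]

/-- if both `P(x) = 1 + x + x²/a + x³/(a²b)` and `T(x) = x + x²/a + x³/(a²b)`
have only real zeros, then for every totally positive sequence `(c_k)` the sequence
`(c_0, c_1, c_2/a, c_3/(a²b), 0, 0, …)` is totally positive. -/
theorem stmt_15 (a b : ℝ) (ha : 0 < a) (hb : 0 < b)
    (hP : ∀ z : ℂ, 1 + z + z ^ 2 / (a : ℂ) + z ^ 3 / ((a : ℂ) ^ 2 * (b : ℂ)) = 0 →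
      ∃ x : ℝ, z = (x : ℂ))
    (hT : ∀ z : ℂ, z + z ^ 2 / (a : ℂ) + z ^ 3 / ((a : ℂ) ^ 2 * (b : ℂ)) = 0 →
      ∃ x : ℝ, z = (x : ℂ))
    (c : ℕ → ℝ) (htp : IsTotallyPositive c) :
    IsTotallyPositive (fun k =>
      if k = 0 then c 0 else if k = 1 then c 1 else if k = 2 then c 2 / a
      else if k = 3 then c 3 / (a ^ 2 * b) else 0) :=
  stmt_15_general a b ha hb hP hT c fun n _ => htp n
end

section
/- Let (a_k)_{k=0}^∞ satisfy a_0 = a_1 = 1, a_k > 0 for all k, and a_{n−1}^2/(a_{n−2} a_n) ≥ 4 for every n ≥ 2 (so a_k = 1/(q_2^{k−1} q_3^{k−2} ⋯ q_{k−1}^2 q_k) for k ≥ 2 with every q_n ≥ 4). Then for every totally positive sequence (b_k)_{k=0}^∞, the sequence (a_k b_k)_{k=0}^∞ is totally positive; i.e., (a_k) is a TP_∞-preserver. -/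
/-!
By the Aissen–Schoenberg–Whitney factorization argument, the coefficients of a polynomial that
splits over `ℝ` and has nonnegative coefficients are totally positive: multiplying by `X + r` with
`r ≥ 0` replaces each row of a minor by a nonnegative combination of two consecutive rows.

If `c_{k+1}² ≥ q c_k c_{k+2}` with `q > 4`, then at `x = -2 c_k / c_{k+1}` the term of degree
`k + 1` of `∑ c_i xⁱ` exceeds in absolute value the sum of its two neighbours, and the alternating
terms beyond them decrease in size, so it determines the sign. This gives as many sign changes as
the degree, hence real roots only. Truncation and the damping factors `s^(-k²)`, `s → 1⁺`, extend
total positivity to all sequences with `q = 4`.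

Finally, the `2 × 2` minors show that a totally positive `b` has the same property with `q = 1`, and
the constants multiply under the termwise product of sequences.
-/

open Polynomial Filter Topology

/-- `c` is nonnegative, has no internal zeros and satisfies `q c_k c_{k+2} ≤ c_{k+1}²`. For `q = 1`
this is log-concavity, for `q = 4` it is Hutchinson's condition. The inequality is kept free of
division so that sequences with finite support, or starting with zeros, are covered. -/
structure IsLogConcaveWith (q : ℝ) (c : ℕ → ℝ) : Prop where
  nonneg : ∀ k, 0 ≤ c k
  ordConnected_support : (Function.support c).OrdConnected
  mul_mul_le_sq : ∀ k, q * (c k * c (k + 2)) ≤ c (k + 1) ^ 2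

namespace IsLogConcaveWith

variable {p q : ℝ} {b c : ℕ → ℝ}

theorem of_pos (hpos : ∀ k, 0 < c k) (h : ∀ k, q * (c k * c (k + 2)) ≤ c (k + 1) ^ 2) :
    IsLogConcaveWith q c where
  nonneg k := (hpos k).le
  ordConnected_support := by
    rw [Function.support_eq_univ fun k => (hpos k).ne']
    exact Set.ordConnected_univ
  mul_mul_le_sq := h

theorem mul (hq : 0 ≤ q) (hb : IsLogConcaveWith p b) (hc : IsLogConcaveWith q c) :
    IsLogConcaveWith (p * q) fun k => b k * c k where
  nonneg k := mul_nonneg (hb.nonneg k) (hc.nonneg k)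
  ordConnected_support := by
    rw [Function.support_mul]
    exact hb.ordConnected_support.inter hc.ordConnected_support
  mul_mul_le_sq k :=
    calc p * q * (b k * c k * (b (k + 2) * c (k + 2)))
        = p * (b k * b (k + 2)) * (q * (c k * c (k + 2))) := by ring
      _ ≤ b (k + 1) ^ 2 * c (k + 1) ^ 2 :=
          mul_le_mul (hb.mul_mul_le_sq k) (hc.mul_mul_le_sq k)
            (mul_nonneg hq (mul_nonneg (hc.nonneg _) (hc.nonneg _))) (sq_nonneg _)
      _ = (b (k + 1) * c (k + 1)) ^ 2 := by ring

theorem inv_pow_sq {s : ℝ} (hs : 0 < s) : IsLogConcaveWith (s ^ 2) fun k => s⁻¹ ^ k ^ 2 :=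
  of_pos (fun k => by positivity) fun k => le_of_eq <|
    calc s ^ 2 * (s⁻¹ ^ k ^ 2 * s⁻¹ ^ (k + 2) ^ 2)
        = (s * s⁻¹) ^ 2 * (s⁻¹ ^ (k + 1) ^ 2) ^ 2 := by ring
      _ = (s⁻¹ ^ (k + 1) ^ 2) ^ 2 := by rw [mul_inv_cancel₀ hs.ne', one_pow, one_mul]

theorem coeff_trunc_mk (hc : IsLogConcaveWith q c) (n : ℕ) :
    IsLogConcaveWith q (PowerSeries.trunc n (PowerSeries.mk c)).coeff where
  nonneg k := by
    rw [PowerSeries.coeff_trunc, PowerSeries.coeff_mk]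
    split_ifs
    exacts [hc.nonneg k, le_rfl]
  ordConnected_support := by
    have hsupp : Function.support (PowerSeries.trunc n (PowerSeries.mk c)).coeff =
        Function.support c ∩ Set.Iio n := by
      ext k
      simp [PowerSeries.coeff_trunc, and_comm]
    rw [hsupp]
    exact hc.ordConnected_support.inter Set.ordConnected_Iio
  mul_mul_le_sq k := by
    simp only [PowerSeries.coeff_trunc, PowerSeries.coeff_mk]
    by_cases hk : k + 2 < n
    · simpa only [if_pos hk, if_pos (show k < n by omega), if_pos (show k + 1 < n by omega)]
        using hc.mul_mul_le_sq k
    · rw [if_neg hk, mul_zero, mul_zero]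
      exact sq_nonneg _

theorem of_coeff_X_pow_mul {m : ℕ} {P : ℝ[X]} (h : IsLogConcaveWith q (X ^ m * P).coeff) :
    IsLogConcaveWith q P.coeff := by
  have hshift : P.coeff = fun k => (X ^ m * P).coeff (k + m) := by
    funext k
    rw [coeff_X_pow_mul]
  rw [hshift]
  refine ⟨fun k => h.nonneg _, h.ordConnected_support.preimage_mono fun i j hij => ?_, fun k => ?_⟩
  · exact Nat.add_le_add_right hij m
  · simpa only [add_right_comm] using h.mul_mul_le_sq (k + m)

theorem mul_mul_succ_le (hq : 1 ≤ q) (hc : IsLogConcaveWith q c) {i j : ℕ} (hij : i < j) :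
    q * (c i * c (j + 1)) ≤ c (i + 1) * c j := by
  induction j, hij using Nat.le_induction with
  | base => simpa only [sq] using hc.mul_mul_le_sq i
  | succ j hij ih =>
    have hnonneg := hc.nonneg
    have hrhs : 0 ≤ c (i + 1) * c (j + 1) := mul_nonneg (hnonneg _) (hnonneg _)
    by_cases hzero : c i = 0 ∨ c (j + 2) = 0
    · rcases hzero with h | h <;> simpa [h] using hrhs
    push Not at hzero
    have hmid : 0 < c (j + 1) := (hnonneg _).lt_of_ne' <|
      hc.ordConnected_support.out hzero.1 hzero.2 ⟨by omega, by omega⟩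
    refine le_of_mul_le_mul_right ?_ hmid
    calc q * (c i * c (j + 2)) * c (j + 1)
        = q * (c i * c (j + 1)) * c (j + 2) := by ring
      _ ≤ c (i + 1) * c j * c (j + 2) := mul_le_mul_of_nonneg_right ih (hnonneg _)
      _ = c (i + 1) * (c j * c (j + 2)) := by ring
      _ ≤ c (i + 1) * c (j + 1) ^ 2 := by
          refine mul_le_mul_of_nonneg_left (le_trans ?_ (hc.mul_mul_le_sq j)) (hnonneg _)
          exact le_mul_of_one_le_left (mul_nonneg (hnonneg _) (hnonneg _)) hq
      _ = c (i + 1) * c (j + 1) * c (j + 1) := by ring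

end IsLogConcaveWith

section AlternatingSum

variable {R : Type*} [CommRing R] [LinearOrder R] [IsStrictOrderedRing R] {T : ℕ → R}

theorem sum_neg_one_pow_mul_mem_Icc_of_antitone (hanti : Antitone T) (hnonneg : ∀ i, 0 ≤ T i)
    (m : ℕ) :
    ∑ i ∈ Finset.range m, (-1) ^ i * T i ∈ Set.Icc 0 (T 0) := by
  induction m generalizing T with
  | zero => simpa using hnonneg 0
  | succ m ih =>
    obtain ⟨hlower, hupper⟩ :=
      ih (hanti.comp_monotone fun _ _ => Nat.succ_le_succ) fun i => hnonneg (i + 1)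
    have hstep : T 1 ≤ T 0 := hanti zero_le_one
    have hrec : ∑ i ∈ Finset.range (m + 1), (-1) ^ i * T i =
        T 0 - ∑ i ∈ Finset.range m, (-1) ^ i * T (i + 1) := by
      simp [Finset.sum_range_succ', pow_succ, neg_add_eq_sub]
    simp only [Function.comp_apply, Nat.succ_eq_add_one, zero_add] at hlower hupper
    rw [hrec]
    constructor <;> linarith

theorem neg_one_pow_mul_sum_mem_Icc_of_monotoneOn {k : ℕ} (hmono : MonotoneOn T (Set.Iic k))
    (hnonneg : ∀ i, 0 ≤ T i) :
    (-1) ^ k * ∑ i ∈ Finset.range (k + 1), (-1) ^ i * T i ∈ Set.Icc 0 (T k) := by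
  induction k with
  | zero => simpa using hnonneg 0
  | succ k ih =>
    obtain ⟨hlower, hupper⟩ := ih (hmono.mono (Set.Iic_subset_Iic.2 k.le_succ))
    have hstep : T k ≤ T (k + 1) := hmono k.le_succ (Set.mem_Iic.2 le_rfl) k.le_succ
    have hrec : (-1) ^ (k + 1) * ∑ i ∈ Finset.range (k + 1 + 1), (-1) ^ i * T i =
        T (k + 1) - (-1) ^ k * ∑ i ∈ Finset.range (k + 1), (-1) ^ i * T i := by
      have hsq : ((-1 : R) ^ k) ^ 2 = 1 := by rw [pow_right_comm, neg_one_sq, one_pow]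
      rw [Finset.sum_range_succ _ (k + 1), pow_succ]
      linear_combination T (k + 1) * hsq
    rw [hrec]
    constructor <;> linarith

theorem neg_one_pow_mul_sum_pos_of_peak {k n : ℕ} (hnonneg : ∀ i, 0 ≤ T i)
    (hmono : MonotoneOn T (Set.Iic k)) (hanti : AntitoneOn T (Set.Ici (k + 2)))
    (hpeak : T k + T (k + 2) < T (k + 1)) (hkn : k + 1 ≤ n) :
    0 < (-1) ^ (k + 1) * ∑ i ∈ Finset.range (n + 1), (-1) ^ i * T i := by
  obtain ⟨m, rfl⟩ := Nat.exists_eq_add_of_le hkn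
  have hsplit : (-1) ^ (k + 1) * ∑ i ∈ Finset.range (k + 1 + m + 1), (-1) ^ i * T i =
      T (k + 1) - (-1) ^ k * ∑ i ∈ Finset.range (k + 1), (-1) ^ i * T i -
        ∑ i ∈ Finset.range m, (-1) ^ i * T (k + 2 + i) := by
    have hsq : ((-1 : R) ^ k) ^ 2 = 1 := by rw [pow_right_comm, neg_one_sq, one_pow]
    have htail : ∑ i ∈ Finset.range m, (-1) ^ (k + 2 + i) * T (k + 2 + i) =
        (-1) ^ k * ∑ i ∈ Finset.range m, (-1) ^ i * T (k + 2 + i) := by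
      rw [Finset.mul_sum]
      exact Finset.sum_congr rfl fun i _ => by ring
    rw [add_right_comm (k + 1) m 1, Finset.sum_range_add _ (k + 1 + 1), Finset.sum_range_succ,
      htail, pow_succ]
    linear_combination (T (k + 1) - ∑ i ∈ Finset.range m, (-1) ^ i * T (k + 2 + i)) * hsq
  have hhead := (neg_one_pow_mul_sum_mem_Icc_of_monotoneOn hmono hnonneg).2
  have htail := (sum_neg_one_pow_mul_mem_Icc_of_antitone (T := fun i => T (k + 2 + i))
    (fun i j hij => hanti (Nat.le_add_right _ _) (Nat.le_add_right _ _)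
      (Nat.add_le_add_left hij _)) (fun i => hnonneg _) m).2
  rw [add_zero] at htail
  rw [hsplit]
  linarith

end AlternatingSum

theorem splits_of_neg_one_pow_mul_eval_pos {P : ℝ[X]} {x : ℕ → ℝ}
    (hx : StrictAntiOn x (Set.Iic P.natDegree))
    (hsign : ∀ k ≤ P.natDegree, 0 < (-1) ^ k * P.eval (x k)) : P.Splits := by
  have hroot : ∀ k < P.natDegree, ∃ y ∈ Set.Ioo (x (k + 1)) (x k), P.eval y = 0 := by
    intro k hk
    have hleft : (-1) ^ k * P.eval (x (k + 1)) < 0 := by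
      have := hsign (k + 1) hk
      rw [pow_succ] at this
      linarith
    have hcont : Continuous fun y => (-1) ^ k * P.eval y := continuous_const.mul P.continuous
    obtain ⟨y, hy, hy0⟩ := intermediate_value_Ioo (hx hk.le hk k.lt_succ_self).le
      hcont.continuousOn ⟨hleft, hsign k hk.le⟩
    exact ⟨y, hy, by simpa using hy0⟩
  choose! y hy hy0 using hroot
  have hy_anti : StrictAntiOn y (Finset.range P.natDegree) := by
    intro i hi j hj hij
    rw [Finset.mem_coe, Finset.mem_range] at hi hj
    calc y j < x j := (hy j hj).2
      _ ≤ x (i + 1) := hx.antitoneOn hi hj.le hij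
      _ < y i := (hy i hi).1
  have hP0 : P ≠ 0 := by
    rintro rfl
    simpa using hsign 0 (Nat.zero_le _)
  refine splits_iff_card_roots.2 (le_antisymm (card_roots' P) ?_)
  have hsubset : (Finset.range P.natDegree).image y ⊆ P.roots.toFinset := by
    intro z hz
    obtain ⟨k, hk, rfl⟩ := Finset.mem_image.1 hz
    exact Multiset.mem_toFinset.2 ((mem_roots hP0).2 (hy0 k (Finset.mem_range.1 hk)))
  calc P.natDegree = ((Finset.range P.natDegree).image y).card := by
        rw [Finset.card_image_of_injOn hy_anti.injOn, Finset.card_range]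
    _ ≤ P.roots.toFinset.card := Finset.card_le_card hsubset
    _ ≤ P.roots.card := Multiset.toFinset_card_le _

theorem IsLogConcaveWith.neg_one_pow_mul_sum_pos {q : ℝ} {c : ℕ → ℝ} (hq : 4 < q)
    (hc : IsLogConcaveWith q c) {k n : ℕ} (hk : 0 < c k) (hk' : 0 < c (k + 1)) (hkn : k + 1 ≤ n) :
    0 < (-1) ^ (k + 1) *
      ∑ i ∈ Finset.range (n + 1), (-1) ^ i * (c i * (2 * (c k / c (k + 1))) ^ i) := by
  have hnonneg := hc.nonneg
  set t := 2 * (c k / c (k + 1)) with ht_def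
  have ht : 0 < t := by positivity
  have htk : t * c (k + 1) = 2 * c k := by
    rw [ht_def, mul_assoc, div_mul_cancel₀ _ hk'.ne']
  have hq1 : 1 ≤ q := by linarith
  have hincr : ∀ i < k, c i ≤ c (i + 1) * t := fun i hik => by
    refine le_of_mul_le_mul_right ?_ hk'
    have hci := mul_nonneg (hnonneg i) hk'.le
    have hci' := mul_nonneg (hnonneg (i + 1)) hk.le
    calc c i * c (k + 1) ≤ q * (c i * c (k + 1)) := le_mul_of_one_le_left hci hq1
      _ ≤ c (i + 1) * c k := hc.mul_mul_succ_le hq1 hik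
      _ ≤ c (i + 1) * (2 * c k) := by linarith
      _ = c (i + 1) * t * c (k + 1) := by rw [mul_assoc, htk]
  have hdecr : ∀ i > k, q * (c (i + 1) * t) ≤ 2 * c i := fun i hki => by
    refine le_of_mul_le_mul_right ?_ hk'
    calc q * (c (i + 1) * t) * c (k + 1) = 2 * (q * (c k * c (i + 1))) := by
          linear_combination q * c (i + 1) * htk
      _ ≤ 2 * (c (k + 1) * c i) := by linarith [hc.mul_mul_succ_le hq1 hki]
      _ = 2 * c i * c (k + 1) := by ring
  refine neg_one_pow_mul_sum_pos_of_peak (fun i => mul_nonneg (hnonneg i) (pow_nonneg ht.le i))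
    (monotoneOn_of_le_add_one Set.ordConnected_Iic fun i _ _ hi => ?_)
    (antitoneOn_of_add_one_le Set.ordConnected_Ici fun i _ hi _ => ?_) ?_ hkn
  · rw [pow_succ', ← mul_assoc]
    exact mul_le_mul_of_nonneg_right (hincr i hi) (pow_nonneg ht.le i)
  · rw [pow_succ', ← mul_assoc]
    have := mul_nonneg (hnonneg (i + 1)) ht.le
    refine mul_le_mul_of_nonneg_right ?_ (pow_nonneg ht.le i)
    nlinarith [hdecr i (by rw [Set.mem_Ici] at hi; omega)]
  · have hstrict : 2 * (c (k + 2) * t) < c (k + 1) := by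
      by_contra! h
      nlinarith [hdecr (k + 1) k.lt_succ_self]
    calc c k * t ^ k + c (k + 2) * t ^ (k + 2)
        = (t * c (k + 1) + 2 * (c (k + 2) * t) * t) / 2 * t ^ k := by rw [htk]; ring
      _ < (t * c (k + 1) + c (k + 1) * t) / 2 * t ^ k := by gcongr
      _ = c (k + 1) * t ^ (k + 1) := by ring

/-- Points separating the roots of `∑ c_k xᵏ` when `c` satisfies Hutchinson's condition. -/
noncomputable def separatingPoint (c : ℕ → ℝ) : ℕ → ℝ
  | 0 => 0
  | k + 1 => -(2 * (c k / c (k + 1)))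

namespace IsLogConcaveWith

variable {q : ℝ} {P : ℝ[X]}

theorem coeff_pos (hP : IsLogConcaveWith q P.coeff) (h0 : P.coeff 0 ≠ 0) {k : ℕ}
    (hk : k ≤ P.natDegree) : 0 < P.coeff k := by
  have hlead : P.coeff P.natDegree ≠ 0 := by
    rw [coeff_natDegree, leadingCoeff_ne_zero]
    rintro rfl
    exact h0 (coeff_zero 0)
  exact (hP.nonneg k).lt_of_ne' (hP.ordConnected_support.out h0 hlead ⟨k.zero_le, hk⟩)

theorem strictAntiOn_separatingPoint (hq : 1 < q) (hP : IsLogConcaveWith q P.coeff)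
    (h0 : P.coeff 0 ≠ 0) : StrictAntiOn (separatingPoint P.coeff) (Set.Iic P.natDegree) := by
  refine strictAntiOn_of_add_one_lt Set.ordConnected_Iic fun k _ _ hk => ?_
  rw [Set.mem_Iic] at hk
  have hpos : ∀ {i}, i ≤ P.natDegree → 0 < P.coeff i := hP.coeff_pos h0
  cases k with
  | zero =>
    have := div_pos (hpos (Nat.zero_le _)) (hpos hk)
    simp only [separatingPoint]
    linarith
  | succ k =>
    have h1 := hpos (show k + 1 ≤ P.natDegree by omega)
    have hprod : 0 < P.coeff k * P.coeff (k + 2) :=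
      mul_pos (hpos (show k ≤ P.natDegree by omega)) (hpos hk)
    have hratio : P.coeff k / P.coeff (k + 1) < P.coeff (k + 1) / P.coeff (k + 2) := by
      refine (div_lt_div_iff₀ h1 (hpos hk)).2 ?_
      calc P.coeff k * P.coeff (k + 2) < q * (P.coeff k * P.coeff (k + 2)) :=
            lt_mul_of_one_lt_left hprod hq
        _ ≤ P.coeff (k + 1) ^ 2 := hP.mul_mul_le_sq k
        _ = P.coeff (k + 1) * P.coeff (k + 1) := sq _
    change -(2 * (P.coeff (k + 1) / P.coeff (k + 2))) < -(2 * (P.coeff k / P.coeff (k + 1)))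
    linarith

theorem neg_one_pow_mul_eval_separatingPoint_pos (hq : 4 < q) (hP : IsLogConcaveWith q P.coeff)
    (h0 : P.coeff 0 ≠ 0) {k : ℕ} (hk : k ≤ P.natDegree) :
    0 < (-1) ^ k * P.eval (separatingPoint P.coeff k) := by
  obtain _ | k := k
  · simpa [separatingPoint, ← coeff_zero_eq_eval_zero] using hP.coeff_pos h0 hk
  have hsum := hP.neg_one_pow_mul_sum_pos hq (hP.coeff_pos h0 (by omega)) (hP.coeff_pos h0 hk) hk
  convert hsum using 2
  rw [eval_eq_sum_range]
  exact Finset.sum_congr rfl fun i _ => by rw [separatingPoint, neg_pow]; ring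

theorem splits_of_coeff_zero_ne_zero (hq : 4 < q) (hP : IsLogConcaveWith q P.coeff)
    (h0 : P.coeff 0 ≠ 0) : P.Splits :=
  splits_of_neg_one_pow_mul_eval_pos (hP.strictAntiOn_separatingPoint (by linarith) h0)
    fun _ => hP.neg_one_pow_mul_eval_separatingPoint_pos hq h0

/-- Kurtz's criterion for all roots to be real. -/
theorem splits (hq : 4 < q) (hP : IsLogConcaveWith q P.coeff) : P.Splits := by
  by_cases hP0 : P = 0
  · rw [hP0]
    exact Splits.zero
  have hdvd : X ^ P.natTrailingDegree ∣ P :=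
    X_pow_dvd_iff.2 fun _ => coeff_eq_zero_of_lt_natTrailingDegree
  obtain ⟨Q, hQ⟩ := hdvd
  have hQ0 : Q.coeff 0 ≠ 0 := by
    have hcoeff := coeff_X_pow_mul Q P.natTrailingDegree 0
    rw [← hQ, zero_add] at hcoeff
    rw [← hcoeff]
    exact trailingCoeff_nonzero_iff_nonzero.2 hP0
  rw [hQ] at hP ⊢
  exact (Splits.X_pow _).mul (hP.of_coeff_X_pow_mul.splits_of_coeff_zero_ne_zero hq hQ0)

end IsLogConcaveWith

namespace IsTotallyPositive

variable {c : ℕ → ℝ}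

theorem nonneg (hc : IsTotallyPositive c) (k : ℕ) : 0 ≤ c k := by
  simpa using hc 1 (fun _ => 0) (fun _ => k) (Subsingleton.strictMono _) (Subsingleton.strictMono _)

theorem mul_add_le (hc : IsTotallyPositive c) {i k d : ℕ} (hik : i < k) (hd : 0 < d) :
    c i * c (k + d) ≤ c k * c (i + d) := by
  have hminor := hc 2 ![0, k - i] ![k, k + d]
    (by simpa [Fin.strictMono_iff_lt_succ] using hik)
    (by simpa [Fin.strictMono_iff_lt_succ] using hd)
  have hcorner : k - (k - i) = i := by omega
  have hdiag : k + d - (k - i) = i + d := by omega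
  have hle : k - i ≤ k + d := by omega
  simp only [Matrix.det_fin_two, Matrix.of_apply, Matrix.cons_val_zero, Matrix.cons_val_one,
    Nat.zero_le, Nat.sub_le, if_true, Nat.sub_zero, hcorner, hdiag, hle] at hminor
  linarith

theorem isLogConcaveWith_one (hc : IsTotallyPositive c) : IsLogConcaveWith 1 c where
  nonneg := hc.nonneg
  ordConnected_support := by
    refine Set.ordConnected_of_Ioo fun i hi l hl _ k ⟨hik, hkl⟩ hk => ?_
    have hle := hc.mul_add_le hik (Nat.sub_pos_of_lt hkl)
    rw [Nat.add_sub_cancel' hkl.le, hk, zero_mul] at hle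
    have hi_pos : 0 < c i := (hc.nonneg i).lt_of_ne' hi
    have hl_pos : 0 < c l := (hc.nonneg l).lt_of_ne' hl
    exact hle.not_gt (mul_pos hi_pos hl_pos)
  mul_mul_le_sq k := by
    rw [one_mul, sq]
    exact hc.mul_add_le k.lt_succ_self one_pos

theorem det_nonneg_of_monotone (hc : IsTotallyPositive c) {n : ℕ} {i j : Fin n → ℕ}
    (hi : Monotone i) (hj : StrictMono j) :
    0 ≤ (Matrix.of fun p q => if i p ≤ j q then c (j q - i p) else 0).det := by
  by_cases hinj : Function.Injective i
  · exact hc n i j (hi.strictMono_of_injective hinj) hj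
  · simp only [Function.Injective, not_forall] at hinj
    obtain ⟨p, p', heq, hne⟩ := hinj
    refine (Matrix.det_zero_of_row_eq hne ?_).ge
    funext q
    simp only [Matrix.of_apply, heq]

end IsTotallyPositive

theorem det_of_sum_smul {R m ι : Type*} [CommRing R] [Fintype m] [DecidableEq m] [Fintype ι]
    (w : ι → R) (A : m → ι → m → R) :
    (Matrix.of fun p => ∑ e, w e • A p e).det =
      ∑ r : m → ι, (∏ p, w (r p)) * (Matrix.of fun p => A p (r p)).det := by
  refine ((Matrix.detRowAlternating (R := R)).toMultilinearMap.map_sum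
    fun p e => w e • A p e).trans (Finset.sum_congr rfl fun r _ => ?_)
  exact (Matrix.detRowAlternating (R := R)).toMultilinearMap.map_smul_univ
    (fun p => w (r p)) fun p => A p (r p)

namespace IsTotallyPositive

theorem coeff_C {l : ℝ} (hl : 0 ≤ l) : IsTotallyPositive (C l).coeff := by
  intro n i j hi hj
  have hentry : ∀ u v, (if u ≤ v then (C l).coeff (v - u) else 0) = if u = v then l else 0 := by
    intro u v
    rw [Polynomial.coeff_C]
    split_ifs <;> first | rfl | omega
  simp only [hentry]
  by_cases hrow : ∃ p, ∀ q, i p ≠ j q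
  · obtain ⟨p, hp⟩ := hrow
    exact (Matrix.det_eq_zero_of_row_eq_zero p fun q => if_neg (hp q)).ge
  · push Not at hrow
    have hij : i = j := by
      refine (hi.range_inj hj).1 (Set.eq_of_subset_of_ncard_le ?_ ?_)
      · rintro _ ⟨p, rfl⟩
        obtain ⟨q, hq⟩ := hrow p
        exact ⟨q, hq.symm⟩
      · rw [Set.ncard_range_of_injective hi.injective, Set.ncard_range_of_injective hj.injective]
    have hdiag : (Matrix.of fun p q => if i p = j q then l else 0) =
        Matrix.diagonal fun _ : Fin n => l := by
      ext p q
      simp [hij, hj.injective.eq_iff, Matrix.diagonal_apply]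
    rw [hdiag, Matrix.det_diagonal]
    exact Finset.prod_nonneg fun _ _ => hl

theorem coeff_X_add_C_mul_s17 {P : ℝ[X]} (hP : IsTotallyPositive P.coeff) {r : ℝ} (hr : 0 ≤ r) :
    IsTotallyPositive ((X + C r) * P).coeff := by
  intro n i j hi hj
  let w : Fin 2 → ℝ := ![r, 1]
  let row : ℕ → Fin n → ℝ := fun u q => if u ≤ j q then P.coeff (j q - u) else 0
  have hw : ∀ e, 0 ≤ w e := Fin.forall_fin_two.2 ⟨hr, zero_le_one⟩
  have hrows : (Matrix.of fun p q => if i p ≤ j q then ((X + C r) * P).coeff (j q - i p) else 0) =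
      Matrix.of fun p => ∑ e : Fin 2, w e • row (i p + e) := by
    ext p q
    simp only [Matrix.of_apply, Fin.sum_univ_two, Pi.add_apply, Pi.smul_apply, smul_eq_mul, w, row,
      Matrix.cons_val_zero, Matrix.cons_val_one, Fin.val_zero, Fin.val_one, add_zero, one_mul,
      add_mul, coeff_add, coeff_C_mul]
    rcases lt_trichotomy (i p) (j q) with hlt | heq | hgt
    · obtain ⟨d, hd⟩ := Nat.exists_eq_add_of_lt hlt
      have hd' : j q - i p = d + 1 := by omega
      have hd'' : j q - (i p + 1) = d := by omega
      rw [if_pos hlt.le, if_pos hlt.le, if_pos (Nat.succ_le_of_lt hlt), hd', hd'', coeff_X_mul,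
        add_comm]
    · simp [heq]
    · rw [if_neg hgt.not_ge, if_neg hgt.not_ge, if_neg (by omega), mul_zero, add_zero]
  rw [hrows, det_of_sum_smul w fun p (e : Fin 2) => row (i p + e)]
  refine Finset.sum_nonneg fun e _ => mul_nonneg (Finset.prod_nonneg fun p _ => hw (e p)) ?_
  refine hP.det_nonneg_of_monotone (i := fun p => i p + e p) (fun p p' hpp' => ?_) hj
  rcases hpp'.eq_or_lt with rfl | hlt
  · exact le_rfl
  · have := hi hlt
    dsimp only
    omega

/-- The easy half of the Aissen–Schoenberg–Whitney theorem. -/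
theorem of_splits {P : ℝ[X]} (hP : P.Splits) (hcoeff : ∀ k, 0 ≤ P.coeff k) :
    IsTotallyPositive P.coeff := by
  have hroots : ∀ r ∈ P.roots, r ≤ 0 := by
    intro r hr
    obtain ⟨hP0, hroot⟩ := mem_roots'.1 hr
    by_contra! hr0
    have hlead : 0 < P.coeff P.natDegree * r ^ P.natDegree :=
      mul_pos ((hcoeff _).lt_of_ne' (leadingCoeff_ne_zero.2 hP0)) (pow_pos hr0 _)
    have heval : 0 < P.eval r := by
      rw [eval_eq_sum_range]
      exact Finset.sum_pos' (fun k _ => mul_nonneg (hcoeff k) (pow_nonneg hr0.le k))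
        ⟨_, Finset.self_mem_range_succ _, hlead⟩
    exact heval.ne' hroot
  rw [hP.eq_prod_roots]
  have hlead : 0 ≤ P.leadingCoeff := hcoeff _
  generalize P.leadingCoeff = l at hlead
  generalize P.roots = s at hroots
  induction s using Multiset.induction_on with
  | empty => simpa using coeff_C hlead
  | cons r s ih =>
    have hstep := (ih fun x hx => hroots x (Multiset.mem_cons_of_mem hx)).coeff_X_add_C_mul_s17
      (neg_nonneg.2 (hroots r (Multiset.mem_cons_self r s)))
    rw [C_neg, ← sub_eq_add_neg] at hstep
    rwa [Multiset.map_cons, Multiset.prod_cons, mul_left_comm]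

end IsTotallyPositive

theorem isClosed_setOf_isTotallyPositive : IsClosed {c | IsTotallyPositive c} := by
  simp only [IsTotallyPositive, Set.ofPred_forall]
  refine isClosed_iInter fun n => isClosed_iInter fun i => isClosed_iInter fun j =>
    isClosed_iInter fun _ => isClosed_iInter fun _ =>
      isClosed_le continuous_const (Continuous.matrix_det ?_)
  refine continuous_matrix fun p q => ?_
  simp only [Matrix.of_apply]
  split_ifs
  exacts [continuous_apply _, continuous_const]

namespace IsLogConcaveWith

variable {q : ℝ} {c : ℕ → ℝ}

theorem isTotallyPositive_of_four_lt (hq : 4 < q) (hc : IsLogConcaveWith q c) :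
    IsTotallyPositive c := by
  have htrunc : ∀ n, IsTotallyPositive (PowerSeries.trunc n (PowerSeries.mk c)).coeff := fun n =>
    .of_splits ((hc.coeff_trunc_mk n).splits hq) (hc.coeff_trunc_mk n).nonneg
  have hlim : Tendsto (fun n => (PowerSeries.trunc n (PowerSeries.mk c)).coeff) atTop (𝓝 c) := by
    refine tendsto_pi_nhds.2 fun k => tendsto_nhds_of_eventually_eq ?_
    filter_upwards [eventually_gt_atTop k] with n hn
    rw [PowerSeries.coeff_trunc, if_pos hn, PowerSeries.coeff_mk]
  exact isClosed_setOf_isTotallyPositive.mem_of_tendsto hlim (Eventually.of_forall htrunc)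

/-- Hutchinson's theorem. -/
theorem isTotallyPositive (hc : IsLogConcaveWith 4 c) : IsTotallyPositive c := by
  have hdamped : ∀ s > 1, IsTotallyPositive fun k => c k * s⁻¹ ^ k ^ 2 := fun s hs =>
    (hc.mul (sq_nonneg s) (inv_pow_sq (zero_lt_one.trans hs))).isTotallyPositive_of_four_lt
      (by nlinarith)
  have hlim : Tendsto (fun (s : ℝ) k => c k * s⁻¹ ^ k ^ 2) (𝓝[>] 1) (𝓝 c) := by
    refine tendsto_pi_nhds.2 fun k => tendsto_nhdsWithin_of_tendsto_nhds ?_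
    have hcont : ContinuousAt (fun s : ℝ => c k * s⁻¹ ^ k ^ 2) 1 := by fun_prop (disch := norm_num)
    simpa [ContinuousAt] using hcont
  exact isClosed_setOf_isTotallyPositive.mem_of_tendsto hlim
    (eventually_nhdsWithin_of_forall hdamped)

end IsLogConcaveWith

theorem stmt_17_general {a : ℕ → ℝ} (ha : IsLogConcaveWith 4 a) : IsTPPreserver a := fun b hb => by
  have hab := ha.mul zero_le_one hb.isLogConcaveWith_one
  rw [mul_one] at hab
  exact hab.isTotallyPositive

/-- Sokal's example via Hutchinson: if `a_0 = a_1 = 1`, `a_k > 0` and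
`a_{n-1}²/(a_{n-2} a_n) ≥ 4` for all `n ≥ 2`, then `a` is a TP_∞-preserver. -/
theorem stmt_17 (a : ℕ → ℝ) (h0 : a 0 = 1) (h1 : a 1 = 1) (hpos : ∀ k, 0 < a k)
    (hratio : ∀ n, 2 ≤ n → 4 ≤ a (n - 1) ^ 2 / (a (n - 2) * a n)) :
    IsTPPreserver a :=
  stmt_17_general <| .of_pos hpos fun k =>
    (le_div_iff₀ (mul_pos (hpos k) (hpos (k + 2)))).1 (hratio (k + 2) le_add_self)
end
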